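/- arXiv:1508.02804 — 6 statements merged into one kernel-verified Lean document; each statement's English description precedes it below -/
import Mathlib

section
/- Let C_q be the standard Reed-Solomon code of dimension k over F_q with 1 ≤ k and k+1 ≤ q−1, and let u ∈ F_q^q be a received word whose interpolation polynomial is u(x) = x^{k+1} − b x^k + v(x) with deg v(x) ≤ k−1 and b ∈ F_q. Then d(u,C_q) = q−k if either (b = 0, p = 2, and k = 1) or (b = 0, p = 2, and k = q−3); otherwise d(u,C_q) = q−k−1. -/
/-! A codeword `P` agrees with `u` exactly at the roots of the monic polynomial
`X ^ (k + 1) - b X ^ k + (v - P)`, and `v - P` ranges over all polynomials of degree `< k`.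
So there are at most `k + 1` agreements; `k + 1` occur exactly when `F` has a subset of size
`k + 1` with sum `b`, and `k` can always be reached by putting the remaining root wherever the
sum `b` forces it (`le_errDist`, `errDist_le`, `errDist_le_of_multiset`).

What remains is a subset-sum problem for `m = k + 1`, `2 ≤ m ≤ q - 1`. Exchanging one element
changes the sum, so some `m`-subset has nonzero sum, and by scaling every nonzero `b` is a sum.
For `b = 0`, passing to complements (the whole field sums to `0` when `q > 2`) allows
`2 m ≤ q`. For `m = 1` (arising as a complement) take `{0}`.
If `m ≥ 3`, start with `m - 2` elements of nonzero sum `t` and add a pair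
`x, -t - x`: fewer than `q` values of `x` are forbidden. If `m = 2`, use `{1, -1}`, which has
two elements exactly when the characteristic is odd; in characteristic `2` a pair of distinct
elements never has sum `0`, nor then does the complement of such a pair. -/

open Polynomial Finset

/-- The standard Reed-Solomon code of dimension `k` over `F` (evaluation set
the whole field): codewords are the evaluation vectors of polynomials of
degree at most `k - 1` (i.e. of degree `< k`). -/
def RSCodeStd (F : Type*) [Field F] (k : ℕ) : Set (F → F) :=
  {f | ∃ P : F[X], P.degree < (k : WithBot ℕ) ∧ ∀ x : F, f x = P.eval x}

/-- The error distance from a received word `u` to a code: the minimum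
Hamming distance from `u` to a codeword. -/
noncomputable def errDist {F : Type*} [Field F] [Fintype F] [DecidableEq F]
    (u : F → F) (Code : Set (F → F)) : ℕ :=
  sInf (hammingDist u '' Code)

/-! ### Subset sums in a finite field -/

section SubsetSum

variable {F : Type*} [Field F] [Fintype F] [DecidableEq F]

/-- If some `m`-subset has sum `0`, exchanging one element for an outside one gives sum `≠ 0`. -/
lemma exists_card_sum_ne_zero (m : ℕ) (h1 : 1 ≤ m) (h2 : m < Fintype.card F) :
    ∃ S : Finset F, S.card = m ∧ ∑ x ∈ S, x ≠ 0 := by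
  obtain ⟨S, -, hS⟩ := Finset.exists_subset_card_eq (s := (Finset.univ : Finset F)) (n := m)
    (by rw [Finset.card_univ]; omega)
  by_cases h0 : ∑ x ∈ S, x = 0
  · obtain ⟨a, ha⟩ : S.Nonempty := by rw [← Finset.card_pos]; omega
    obtain ⟨c, hc⟩ : ∃ c, c ∉ S := by
      by_contra! h
      rw [Finset.eq_univ_iff_forall.mpr h, Finset.card_univ] at hS
      omega
    have hc' : c ∉ S.erase a := fun h => hc (Finset.mem_of_mem_erase h)
    refine ⟨insert c (S.erase a), ?_, ?_⟩
    · rw [Finset.card_insert_of_notMem hc', Finset.card_erase_of_mem ha]; omega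
    · rw [Finset.sum_insert hc']
      have := Finset.add_sum_erase S (fun x => x) ha
      intro h
      apply hc
      have : c = a := by linear_combination h - this - h0
      rwa [this]
  · exact ⟨S, hS, h0⟩

lemma exists_card_sum_eq_of_ne_zero (m : ℕ) (h1 : 1 ≤ m) (h2 : m < Fintype.card F)
    (b : F) (hb : b ≠ 0) : ∃ S : Finset F, S.card = m ∧ ∑ x ∈ S, x = b := by
  obtain ⟨S, hS, h0⟩ := exists_card_sum_ne_zero (F := F) m h1 h2
  have hc : b / (∑ x ∈ S, x) ≠ 0 := div_ne_zero hb h0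
  have hinj : Function.Injective (fun x : F => b / (∑ x ∈ S, x) * x) := mul_right_injective₀ hc
  refine ⟨S.image (fun x => b / (∑ x ∈ S, x) * x), ?_, ?_⟩
  · rw [Finset.card_image_of_injective _ hinj, hS]
  · rw [Finset.sum_image (fun x _ y _ h => hinj h), ← Finset.mul_sum, div_mul_cancel₀ _ h0]

lemma exists_card_sum_eq_zero_of_le (m : ℕ) (h1 : 1 ≤ m) (h2 : 2 * m ≤ Fintype.card F)
    (h : (2 : F) = 0 → m ≠ 2) : ∃ S : Finset F, S.card = m ∧ ∑ x ∈ S, x = 0 := by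
  obtain rfl | rfl | h3 : m = 1 ∨ m = 2 ∨ 3 ≤ m := by omega
  · exact ⟨{0}, by simp, by simp⟩
  · have hne : (1 : F) ≠ -1 := by
      intro h'
      exact h (by linear_combination h') rfl
    exact ⟨{1, -1}, Finset.card_pair hne, by rw [Finset.sum_pair hne]; ring⟩
  · obtain ⟨T, hT, ht⟩ := exists_card_sum_ne_zero (F := F) (m - 2) (by omega) (by omega)
    set t := ∑ x ∈ T, x with htdef
    obtain ⟨x, hx⟩ : ∃ x, x ∉ T ∪ T.image (fun y => -t - y) ∪ {-t / 2} := by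
      by_contra! hall
      have e := Finset.eq_univ_iff_forall.mpr hall
      have c1 := Finset.card_union_le (T ∪ T.image (fun y => -t - y)) {-t / 2}
      have c2 := Finset.card_union_le T (T.image (fun y => -t - y))
      have c3 := Finset.card_image_le (s := T) (f := fun y => -t - y)
      rw [e, Finset.card_univ, Finset.card_singleton] at c1
      omega
    simp only [Finset.mem_union, Finset.mem_singleton, Finset.mem_image, not_or, not_exists,
      not_and] at hx
    obtain ⟨⟨hx1, hx2⟩, hx3⟩ := hx
    have hy : -t - x ∉ T := fun hmem => hx2 _ hmem (by ring)
    have hxy : x ≠ -t - x := by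
      intro e
      -- In characteristic 2 the quotient `-t / 2` is junk, but then `x + x = -t` forces `t = 0`.
      by_cases h20 : (2 : F) = 0
      · apply ht
        linear_combination e - x * h20
      · apply hx3
        field_simp
        linear_combination e
    have hx' : x ∉ insert (-t - x) T := by
      simp only [Finset.mem_insert, not_or]
      exact ⟨hxy, hx1⟩
    refine ⟨insert x (insert (-t - x) T), ?_, ?_⟩
    · rw [Finset.card_insert_of_notMem hx', Finset.card_insert_of_notMem hy]; omega
    · rw [Finset.sum_insert hx', Finset.sum_insert hy, ← htdef]; ring

lemma sum_compl_eq_neg (hq : 2 < Fintype.card F) (S : Finset F) :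
    ∑ x ∈ Sᶜ, x = -∑ x ∈ S, x := by
  have h := FiniteField.sum_pow_lt_card_sub_one F 1 (by omega)
  simp only [pow_one] at h
  rw [← Finset.sum_add_sum_compl S] at h
  linear_combination h

lemma exists_card_sum_eq (m : ℕ) (h1 : 2 ≤ m) (h2 : m + 1 ≤ Fintype.card F) (b : F)
    (h : ¬ (b = 0 ∧ (2 : F) = 0 ∧ (m = 2 ∨ m = Fintype.card F - 2))) :
    ∃ S : Finset F, S.card = m ∧ ∑ x ∈ S, x = b := by
  by_cases hb : b = 0
  · subst hb
    by_cases hm : 2 * m ≤ Fintype.card F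
    · exact exists_card_sum_eq_zero_of_le m (by omega) hm (fun h20 h' => h ⟨rfl, h20, .inl h'⟩)
    · obtain ⟨S, hS, h0⟩ := exists_card_sum_eq_zero_of_le (F := F) (Fintype.card F - m)
        (by omega) (by omega) (fun h20 h' => h ⟨rfl, h20, .inr (by omega)⟩)
      refine ⟨Sᶜ, ?_, ?_⟩
      · rw [Finset.card_compl]; omega
      · rw [sum_compl_eq_neg (by omega), h0, neg_zero]
  · exact exists_card_sum_eq_of_ne_zero m (by omega) (by omega) b hb

lemma sum_ne_zero_of_card_two (h20 : (2 : F) = 0) (S : Finset F) (hS : S.card = 2) :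
    ∑ x ∈ S, x ≠ 0 := by
  obtain ⟨x, y, hxy, rfl⟩ := Finset.card_eq_two.mp hS
  rw [Finset.sum_pair hxy]
  intro e
  exact hxy (by linear_combination e - y * h20)

lemma sum_ne_zero_of_card (h20 : (2 : F) = 0) (hq : 2 < Fintype.card F) (S : Finset F)
    (hS : S.card = 2 ∨ S.card = Fintype.card F - 2) : ∑ x ∈ S, x ≠ 0 := by
  rcases hS with hS | hS
  · exact sum_ne_zero_of_card_two h20 S hS
  · have := sum_ne_zero_of_card_two h20 Sᶜ (by rw [Finset.card_compl]; omega)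
    rwa [sum_compl_eq_neg hq, neg_ne_zero] at this

end SubsetSum

/-! ### Agreement sets and roots -/

section Distance

variable {F : Type*} [Field F]

/-- A product of `k + 1` linear factors is `X ^ (k + 1) - (sum of the roots) X ^ k` up to a
polynomial of degree `< k`. -/
lemma degree_sub_prod_lt (k : ℕ) (s : Multiset F) (hs : s.card = k + 1) :
    (X ^ (k + 1) - C s.sum * X ^ k - (s.map (fun a => X - C a)).prod).degree
      < (k : WithBot ℕ) := by
  rw [Polynomial.degree_lt_iff_coeff_zero]
  intro m hm
  have hmon : (s.map (fun a => X - C a)).prod.Monic := monic_multisetProd_X_sub_C s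
  have hdeg : (s.map (fun a => X - C a)).prod.natDegree = k + 1 := by
    rw [natDegree_multiset_prod_X_sub_C_eq_card, hs]
  simp only [coeff_sub, coeff_X_pow, coeff_C_mul]
  obtain rfl | rfl | h : m = k ∨ m = k + 1 ∨ k + 1 < m := by omega
  · have := multiset_prod_X_sub_C_coeff_card_pred s (by omega)
    rw [hs, Nat.add_sub_cancel] at this
    rw [this]
    simp
  · have := hmon.coeff_natDegree
    rw [hdeg] at this
    rw [this]
    simp
  · rw [coeff_eq_zero_of_natDegree_lt (by omega)]
    simp [show m ≠ k + 1 by omega, show m ≠ k by omega]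

variable [Fintype F] [DecidableEq F]

lemma hammingDist_eq {F : Type*} [Fintype F] [DecidableEq F] (u w : F → F) :
    hammingDist u w = Fintype.card F - (Finset.univ.filter (fun x => u x = w x)).card := by
  have := Finset.card_filter_add_card_filter_not (s := (Finset.univ : Finset F))
    (fun x => u x = w x)
  rw [Finset.card_univ] at this
  unfold hammingDist
  simp only [ne_eq]
  omega

/-- A multiset of `k + 1` prescribed roots with sum `b` yields a codeword agreeing with `u` at
each of them. -/
lemma errDist_le_of_multiset (k : ℕ) (b : F) (v : F[X]) (hv : v.degree < (k : WithBot ℕ))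
    (u : F → F) (hu : ∀ x : F, u x = (X ^ (k + 1) - C b * X ^ k + v).eval x)
    (s : Multiset F) (hs : s.card = k + 1) (hb : s.sum = b) :
    errDist u (RSCodeStd F k) ≤ Fintype.card F - s.toFinset.card := by
  set Q := (s.map (fun a => X - C a)).prod with hQ
  have hP : (X ^ (k + 1) - C b * X ^ k + v - Q).degree < (k : WithBot ℕ) := by
    have h1 := degree_sub_prod_lt k s hs
    rw [hb, ← hQ] at h1
    have e : X ^ (k + 1) - C b * X ^ k + v - Q = (X ^ (k + 1) - C b * X ^ k - Q) + v := by ring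
    rw [e]
    exact (degree_add_le _ _).trans_lt (max_lt h1 hv)
  have hmem : (fun x => (X ^ (k + 1) - C b * X ^ k + v - Q).eval x) ∈ RSCodeStd F k :=
    ⟨_, hP, fun x => rfl⟩
  refine (Nat.sInf_le (Set.mem_image_of_mem _ hmem)).trans ?_
  rw [hammingDist_eq]
  refine Nat.sub_le_sub_left (Finset.card_le_card ?_) _
  intro x hx
  rw [Multiset.mem_toFinset] at hx
  have h0 : Q.eval x = 0 := by
    rw [hQ, eval_multiset_prod, Multiset.prod_eq_zero_iff]
    simp only [Multiset.map_map, Multiset.mem_map, Function.comp]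
    exact ⟨x, hx, by simp⟩
  simp only [Finset.mem_filter, Finset.mem_univ, true_and]
  rw [hu, eval_sub _ Q, h0, sub_zero]

lemma errDist_le (k : ℕ) (hk1 : k + 1 ≤ Fintype.card F - 1) (b : F) (v : F[X])
    (hv : v.degree < (k : WithBot ℕ))
    (u : F → F) (hu : ∀ x : F, u x = (X ^ (k + 1) - C b * X ^ k + v).eval x) :
    errDist u (RSCodeStd F k) ≤ Fintype.card F - k := by
  obtain ⟨S, -, hS⟩ := Finset.exists_subset_card_eq (s := (Finset.univ : Finset F)) (n := k)
    (by rw [Finset.card_univ]; omega)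
  refine (errDist_le_of_multiset k b v hv u hu ((b - S.val.sum) ::ₘ S.val) ?_ ?_).trans ?_
  · rw [Multiset.card_cons, Finset.card_val, hS]
  · rw [Multiset.sum_cons]; ring
  · refine Nat.sub_le_sub_left ?_ _
    rw [← hS]
    refine Finset.card_le_card fun x hx => ?_
    rw [Multiset.mem_toFinset]
    exact Multiset.mem_cons_of_mem hx

/-- A set of roots of `X ^ (k + 1) - b X ^ k + w` (such as the agreement set of a codeword)
either has at most `k` elements, or has exactly `k + 1` elements and these sum to `b`. -/
lemma card_agree (k : ℕ) (b : F) (w : F[X]) (hw : w.degree < (k : WithBot ℕ)) (A : Finset F)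
    (hA : ∀ x ∈ A, (X ^ (k + 1) - C b * X ^ k + w).eval x = 0) :
    A.card ≤ k ∨ (A.card = k + 1 ∧ ∑ x ∈ A, x = b) := by
  by_cases hle : A.card ≤ k
  · exact .inl hle
  have key : ∀ B ⊆ A, B.card = k + 1 →
      X ^ (k + 1) - C b * X ^ k + w = (B.val.map (fun a => X - C a)).prod ∧
      ∑ x ∈ B, x = b := by
    intro B hBA hB
    set R := X ^ (k + 1) - C B.val.sum * X ^ k - (B.val.map (fun a => X - C a)).prod with hR
    have hRd : R.degree < (k : WithBot ℕ) := degree_sub_prod_lt k B.val hB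
    have e : X ^ (k + 1) - C b * X ^ k + w - (B.val.map (fun a => X - C a)).prod
        = C (B.val.sum - b) * X ^ k + (R + w) := by
      rw [hR, C_sub]; ring
    have hRw : (R + w).degree < (k : WithBot ℕ) :=
      (degree_add_le _ _).trans_lt (max_lt hRd hw)
    have hEq : X ^ (k + 1) - C b * X ^ k + w = (B.val.map (fun a => X - C a)).prod := by
      refine eq_of_degree_sub_lt_of_eval_finset_eq B ?_ ?_
      · rw [e, hB]
        have hk : (k : WithBot ℕ) < ((k + 1 : ℕ) : WithBot ℕ) := by
          exact_mod_cast Nat.lt_succ_self k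
        exact (degree_add_le _ _).trans_lt
          (max_lt ((degree_C_mul_X_pow_le _ _).trans_lt hk) (hRw.trans hk))
      · intro x hx
        rw [hA x (hBA hx), eval_multiset_prod, eq_comm, Multiset.prod_eq_zero_iff]
        simp only [Multiset.map_map, Multiset.mem_map, Function.comp]
        exact ⟨x, hx, by simp⟩
    refine ⟨hEq, ?_⟩
    rw [hEq, sub_self] at e
    have hc := congrArg (fun f => coeff f k) e
    simp only [coeff_zero, coeff_add (C _ * X ^ k), coeff_C_mul, coeff_X_pow, if_true, mul_one,
      coeff_eq_zero_of_degree_lt hRw, add_zero] at hc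
    have h1 : ∑ x ∈ B, x = B.val.sum := (Finset.sum_val B).symm
    rw [h1]
    exact (sub_eq_zero.mp hc.symm)
  obtain ⟨B, hBA, hB⟩ := Finset.exists_subset_card_eq (s := A) (n := k + 1) (by omega)
  obtain ⟨hEq, hsum⟩ := key B hBA hB
  have hAB : B = A := by
    refine Finset.Subset.antisymm hBA fun x hx => ?_
    have h0 := hA x hx
    rw [hEq, eval_multiset_prod, Multiset.prod_eq_zero_iff] at h0
    simp only [Multiset.map_map, Multiset.mem_map, Function.comp] at h0
    obtain ⟨a, ha, hxa⟩ := h0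
    have : x = a := by simpa [sub_eq_zero] using hxa
    rw [this]
    exact ha
  subst hAB
  exact .inr ⟨hB, hsum⟩

lemma le_errDist (k d : ℕ) (b : F) (v : F[X]) (hv : v.degree < (k : WithBot ℕ))
    (u : F → F) (hu : ∀ x : F, u x = (X ^ (k + 1) - C b * X ^ k + v).eval x)
    (hd : ∀ A : Finset F, A.card ≤ k ∨ (A.card = k + 1 ∧ ∑ x ∈ A, x = b) →
      d ≤ Fintype.card F - A.card) :
    d ≤ errDist u (RSCodeStd F k) := by
  refine le_csInf ⟨_, fun _ => 0, ⟨0, by simp, by simp⟩, rfl⟩ ?_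
  rintro _ ⟨c, ⟨P, hP, hc⟩, rfl⟩
  rw [hammingDist_eq]
  refine hd _ (card_agree k b (v - P) ((degree_sub_le _ _).trans_lt (max_lt hv hP)) _ ?_)
  intro x hx
  simp only [Finset.mem_filter, Finset.mem_univ, true_and] at hx
  rw [hu, hc] at hx
  rw [← add_sub_assoc, eval_sub, hx, sub_self]

end Distance

/-- for the standard Reed-Solomon code `C_q` and a received word
`u` with interpolation polynomial `x^{k+1} - b x^k + v(x)`, `deg v ≤ k - 1`:
`d(u, C_q) = q - k` if (`b = 0`, `p = 2`, `k = 1`) or (`b = 0`, `p = 2`,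
`k = q - 3`); otherwise `d(u, C_q) = q - k - 1`. -/
theorem stmt_3 {F : Type*} [Field F] [Fintype F] [DecidableEq F]
    (p : ℕ) [Fact p.Prime] [CharP F p]
    (k : ℕ) (hk : 1 ≤ k) (hk1 : k + 1 ≤ Fintype.card F - 1)
    (b : F) (v : F[X]) (hv : v.degree < (k : WithBot ℕ))
    (u : F → F) (hu : ∀ x : F, u x = (X ^ (k + 1) - C b * X ^ k + v).eval x) :
    ((b = 0 ∧ p = 2 ∧ (k = 1 ∨ k = Fintype.card F - 3)) →
        errDist u (RSCodeStd F k) = Fintype.card F - k) ∧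
    (¬ (b = 0 ∧ p = 2 ∧ (k = 1 ∨ k = Fintype.card F - 3)) →
        errDist u (RSCodeStd F k) = Fintype.card F - k - 1) := by
  have hp : p = 2 ↔ (2 : F) = 0 := by
    constructor
    · rintro rfl
      exact_mod_cast CharP.cast_eq_zero F 2
    · intro h
      have h' : p ∣ 2 := (CharP.cast_eq_zero_iff F p 2).mp (by exact_mod_cast h)
      exact (Nat.prime_dvd_prime_iff_eq Fact.out Nat.prime_two).mp h'
  constructor
  · rintro ⟨hb, hp2, hk2⟩
    refine le_antisymm (errDist_le k hk1 b v hv u hu) (le_errDist k _ b v hv u hu ?_)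
    rintro A (hA | ⟨hA, hs⟩)
    · omega
    · exact absurd (hs.trans hb)
        (sum_ne_zero_of_card (hp.mp hp2) (by omega) A (by omega))
  · intro hne
    refine le_antisymm ?_ (le_errDist k _ b v hv u hu ?_)
    · obtain ⟨S, hS, hsum⟩ := exists_card_sum_eq (F := F) (k + 1) (by omega) (by omega) b
        (by
          rintro ⟨h1, h2, h3⟩
          exact hne ⟨h1, hp.mpr h2, by omega⟩)
      have := errDist_le_of_multiset k b v hv u hu S.val hS
        ((Finset.sum_val S).trans hsum)
      rwa [Finset.val_toFinset, hS, ← Nat.sub_sub] at this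
    · rintro A (hA | ⟨hA, -⟩) <;> omega
end

section
/- Let C_q be the standard Reed-Solomon code of dimension k ≥ 1 over F_q with k+2 = q−1, and let u ∈ F_q^q be a received word whose interpolation polynomial is u(x) = x^{k+2} − b x^{k+1} + c x^k + v(x) with deg v(x) ≤ k−1 and b,c ∈ F_q. Then d(u,C_q) = q−k−2 if b² = c, and d(u,C_q) = q−k−1 if b² ≠ c. -/
/-!
Write `q = #F = k + 3`, so the claimed distances are `1` and `2`. For `a ∈ F` the polynomial
`G_a = ∑_{i < q} a^(q-1-i) X^i` satisfies `(X - a) G_a = X^q - a^q`, hence `G_a = 1` away from `a`,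
while its three top coefficients are `1, a, a²` (`exists_tail`). Conversely a polynomial
`X^(k+2) - b X^(k+1) + c X^k + ⋯` vanishing away from `a` must be `G_a - 1`, because the difference
has degree less than `q - 1`; thus `b = -a` and `c = a²` (`eq_of_vanish`).

Distance `0` would therefore force `b = -a` for every `a`, and distance at most `1` forces `b² = c`.
If `b² = c`, subtracting `G_{-b} - 1` gives a codeword at distance at most `1`. If `b² ≠ c`, a
combination `l (G_{a₁} - 1) + (1 - l) (G_{a₂} - 1)` vanishes off `{a₁, a₂}` and has the coefficients
`1, -b, c` exactly when `(a₁ + b)(a₂ + b) = b² - c` and `l a₁ + (1 - l) a₂ = -b`; such distinct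
`a₁, a₂` exist since `q ≥ 4`.
-/

open Polynomial Finset

/-- The tail of the geometric sum `∑ i ≤ k + 2, a^(k+2-i) X^i`, which equals `1` at every
`x ≠ a` when `#F = k + 3`. -/
lemma exists_tail {F : Type*} [Field F] [Fintype F] (k : ℕ)
    (hq : Fintype.card F = k + 3) (a : F) :
    ∃ R : F[X], R.degree < (k : WithBot ℕ) ∧
      ∀ x : F, x ≠ a → x ^ (k + 2) + a * x ^ (k + 1) + a ^ 2 * x ^ k + R.eval x = 1 := by
  refine ⟨∑ i ∈ range k, C (a ^ (k + 2 - i)) * X ^ i, ?_, ?_⟩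
  · rw [← mem_degreeLT]
    refine Submodule.sum_mem _ fun i hi => ?_
    rw [mem_degreeLT]
    exact (degree_C_mul_X_pow_le i _).trans_lt (by exact_mod_cast Finset.mem_range.1 hi)
  · intro x hx
    have h := (Commute.all x a).geom_sum₂_mul (k + 3)
    rw [← hq, FiniteField.pow_card, FiniteField.pow_card, hq] at h
    have h1 := mul_right_cancel₀ (sub_ne_zero.2 hx) (h.trans (one_mul _).symm)
    rw [Finset.sum_range_succ, Finset.sum_range_succ, Finset.sum_range_succ] at h1
    have e0 : k + 3 - 1 - k = 2 := by omega
    have e1 : k + 3 - 1 - (k + 1) = 1 := by omega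
    have e2 : k + 3 - 1 - (k + 2) = 0 := by omega
    rw [e0, e1, e2] at h1
    have hs : (∑ i ∈ range k, C (a ^ (k + 2 - i)) * X ^ i : F[X]).eval x
        = ∑ i ∈ range k, x ^ i * a ^ (k + 3 - 1 - i) := by
      rw [eval_finsetSum]
      refine Finset.sum_congr rfl fun i _ => ?_
      simp [mul_comm]
    rw [hs]
    linear_combination h1

/-- A polynomial `X^(k+2) - b X^(k+1) + c X^k + ⋯` vanishing away from `a` is determined by `a`. -/
lemma eq_of_vanish {F : Type*} [Field F] [Fintype F] [DecidableEq F] (k : ℕ) (hk : 1 ≤ k)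
    (hq : Fintype.card F = k + 3) (a b c : F) (w : F[X]) (hw : w.degree < (k : WithBot ℕ))
    (h : ∀ x : F, x ≠ a → x ^ (k + 2) - b * x ^ (k + 1) + c * x ^ k + w.eval x = 0) :
    b = -a ∧ c = a ^ 2 := by
  obtain ⟨R, hR, hR1⟩ := exists_tail k hq a
  have hE : (w - R + 1 : F[X]).degree < (k : WithBot ℕ) := by
    rw [← mem_degreeLT] at hw hR ⊢
    refine Submodule.add_mem _ (Submodule.sub_mem _ hw hR) ?_
    rw [mem_degreeLT, degree_one]
    exact_mod_cast hk
  set E : F[X] := w - R + 1 with hEdef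
  have hT : C (-b - a) * X ^ (k + 1) + C (c - a ^ 2) * X ^ k + E = 0 := by
    refine eq_zero_of_degree_lt_of_eval_finset_eq_zero (univ.erase a) ?_ ?_
    · have hc : (univ.erase a).card = k + 2 := by
        rw [card_erase_of_mem (mem_univ _), card_univ, hq]; rfl
      rw [hc, ← mem_degreeLT]
      refine Submodule.add_mem _ (Submodule.add_mem _ ?_ ?_) ?_ <;> rw [mem_degreeLT]
      · exact (degree_C_mul_X_pow_le _ _).trans_lt (by exact_mod_cast Nat.lt_succ_self _)
      · exact (degree_C_mul_X_pow_le _ _).trans_lt (by exact_mod_cast (by omega : k < k + 2))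
      · exact hE.trans (by exact_mod_cast (by omega : k < k + 2))
    · intro x hx
      have hxa := ne_of_mem_erase hx
      simp only [hEdef, eval_add, eval_sub, eval_mul, eval_C, eval_pow, eval_X, eval_one]
      linear_combination h x hxa - hR1 x hxa
  have hE0 : E.coeff k = 0 := coeff_eq_zero_of_degree_lt hE
  have hE1 : E.coeff (k + 1) = 0 :=
    coeff_eq_zero_of_degree_lt (hE.trans (by exact_mod_cast Nat.lt_succ_self _))
  have h1 := congrArg (fun f => coeff f (k + 1)) hT
  have h0 := congrArg (fun f => coeff f k) hT
  simp only [coeff_add, coeff_C_mul, coeff_X_pow, hE0, hE1, coeff_zero] at h0 h1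
  simp at h0 h1
  exact ⟨by linear_combination -h1, by linear_combination h0⟩

lemma errDist_eq {F : Type*} [Field F] [Fintype F] [DecidableEq F] (u : F → F)
    (S : Set (F → F)) (m : ℕ) (hlow : ∀ f ∈ S, m ≤ hammingDist u f)
    (hup : ∃ f ∈ S, hammingDist u f ≤ m) : errDist u S = m := by
  obtain ⟨f, hf, hfm⟩ := hup
  apply le_antisymm
  · exact (Nat.sInf_le (Set.mem_image_of_mem _ hf)).trans hfm
  · refine le_csInf (Set.Nonempty.image _ ⟨f, hf⟩) ?_
    rintro _ ⟨g, hg, rfl⟩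
    exact hlow g hg

lemma hammingDist_le_of_agree {F : Type*} [Fintype F] [DecidableEq F] (u f : F → F)
    (s : Finset F) (h : ∀ x, x ∉ s → u x = f x) : hammingDist u f ≤ s.card := by
  refine card_le_card fun x hx => ?_
  by_contra hxs
  exact (mem_filter.1 hx).2 (h x hxs)

/-- for the standard Reed-Solomon code `C_q` with `k + 2 = q - 1`
and a received word `u` with interpolation polynomial
`x^{k+2} - b x^{k+1} + c x^k + v(x)`, `deg v ≤ k - 1`:
`d(u, C_q) = q - k - 2` if `b² = c`, and `d(u, C_q) = q - k - 1` if `b² ≠ c`. -/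
theorem stmt_5 {F : Type*} [Field F] [Fintype F] [DecidableEq F]
    (p : ℕ) [Fact p.Prime] [CharP F p]
    (k : ℕ) (hk : 1 ≤ k) (hk2 : k + 2 = Fintype.card F - 1)
    (b c : F) (v : F[X]) (hv : v.degree < (k : WithBot ℕ))
    (u : F → F)
    (hu : ∀ x : F, u x = (X ^ (k + 2) - C b * X ^ (k + 1) + C c * X ^ k + v).eval x) :
    (b ^ 2 = c → errDist u (RSCodeStd F k) = Fintype.card F - k - 2) ∧
    (b ^ 2 ≠ c → errDist u (RSCodeStd F k) = Fintype.card F - k - 1) := by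
  have hq : Fintype.card F = k + 3 := by omega
  have d1 : Fintype.card F - k - 2 = 1 := by omega
  have d2 : Fintype.card F - k - 1 = 2 := by omega
  rw [d1, d2]
  simp only [eval_add, eval_sub, eval_mul, eval_C, eval_pow, eval_X] at hu
  have key : ∀ f ∈ RSCodeStd F k, ∀ a : F, (∀ x, x ≠ a → u x = f x) →
      b = -a ∧ c = a ^ 2 := by
    rintro f ⟨P, hP, hf⟩ a h
    refine eq_of_vanish k hk hq a b c (v - P) ?_ fun x hx => ?_
    · rw [← mem_degreeLT] at hv hP ⊢
      exact Submodule.sub_mem _ hv hP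
    · rw [eval_sub]
      linear_combination h x hx - hu x + hf x
  -- The codeword obtained by subtracting `l (G_a - 1) + (1 - l) (G_a' - 1)` from `u`.
  have build : ∀ a a' l : F, l * a + (1 - l) * a' = -b → l * a ^ 2 + (1 - l) * a' ^ 2 = c →
      ∃ f ∈ RSCodeStd F k, hammingDist u f ≤ ({a, a'} : Finset F).card := by
    intro a a' l h1 h2
    obtain ⟨R, hR, hR1⟩ := exists_tail k hq a
    obtain ⟨R', hR', hR1'⟩ := exists_tail k hq a'
    refine ⟨_, ⟨v - l • R - (1 - l) • R' + 1, ?_, fun x => rfl⟩,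
      hammingDist_le_of_agree _ _ _ fun x hx => ?_⟩
    · rw [← mem_degreeLT] at hv hR hR' ⊢
      refine Submodule.add_mem _ (Submodule.sub_mem _ (Submodule.sub_mem _ hv
        (Submodule.smul_mem _ _ hR)) (Submodule.smul_mem _ _ hR')) ?_
      rw [mem_degreeLT, degree_one]
      exact_mod_cast hk
    · simp only [mem_insert, mem_singleton, not_or] at hx
      simp only [eval_add, eval_sub, eval_smul, smul_eq_mul, eval_one]
      linear_combination hu x + l * hR1 x hx.1 + (1 - l) * hR1' x hx.2
        - x ^ (k + 1) * h1 - x ^ k * h2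
  constructor
  · intro hbc
    refine errDist_eq _ _ _ (fun f hf => ?_) ?_
    · by_contra hlt
      have h0 : u = f := hammingDist_eq_zero.1 (by omega)
      have e0 := (key f hf 0 fun x _ => congrFun h0 x).1
      have e1 := (key f hf 1 fun x _ => congrFun h0 x).1
      exact one_ne_zero (α := F) (by linear_combination e1 - e0)
    · simpa using build (-b) (-b) 1 (by ring) (by linear_combination hbc)
  · intro hbc
    refine errDist_eq _ _ _ (fun f hf => ?_) ?_
    · by_contra hlt
      have h1 : (univ.filter fun x => u x ≠ f x).card ≤ 1 := by
        change hammingDist u f ≤ 1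
        omega
      obtain ⟨a, ha⟩ := card_le_one_iff_subset_singleton.1 h1
      obtain ⟨hb, hc⟩ := key f hf a fun x hx => by
        by_contra hne
        exact hx (mem_singleton.1 (ha (mem_filter.2 ⟨mem_univ x, hne⟩)))
      exact hbc (by rw [hb, hc]; ring)
    · -- At most three elements `t` satisfy `t = 0` or `t² = b² - c`, and `#F ≥ 4`.
      obtain ⟨t, ht0, ht⟩ : ∃ t : F, t ≠ 0 ∧ t ^ 2 ≠ b ^ 2 - c := by
        by_contra! hall
        have hp : (X * (X ^ 2 - C (b ^ 2 - c)) : F[X]) ≠ 0 :=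
          mul_ne_zero X_ne_zero (X_pow_sub_C_ne_zero (by norm_num) _)
        have hdeg : (X * (X ^ 2 - C (b ^ 2 - c)) : F[X]).natDegree ≤ 3 := by
          compute_degree
        refine hp (eq_zero_of_natDegree_lt_card_of_eval_eq_zero' _ univ (fun x _ => ?_) ?_)
        · by_cases hx : x = 0
          · simp [hx]
          · simp [hall x hx]
        · rw [card_univ]
          omega
      have hne : t - (b ^ 2 - c) / t ≠ 0 := by
        intro h
        field_simp at h
        exact ht (by linear_combination h)
      -- The points are `t - b` and `(b² - c)/t - b`; `l` solves `l a₁ + (1 - l) a₂ = -b`.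
      set s := (b ^ 2 - c) / t with hs
      have hst : s * t = b ^ 2 - c := div_mul_cancel₀ _ ht0
      have hl : (-s / (t - s)) * (t - s) = -s := div_mul_cancel₀ _ hne
      obtain ⟨f, hf, hd⟩ := build (t - b) (s - b) (-s / (t - s))
        (by linear_combination hl)
        (by linear_combination (t + s - 2 * b) * hl - hst)
      exact ⟨f, hf, hd.trans card_le_two⟩
end

section
/- Let q be a power of 2, let C_q be the standard Reed-Solomon code of dimension k ≥ 1 over F_q with k+2 ≤ q−2, and let u ∈ F_q^q be a received word whose interpolation polynomial is u(x) = x^{k+2} − b x^{k+1} + c x^k + v(x) with deg v(x) ≤ k−1 and b,c ∈ F_q. Then d(u,C_q) = q−k−2 if (k,b,c) satisfies one of the following: (1) 2 ∣ k+1, 4 ∤ k+1, and b² ≠ c; (2) 2 ∣ k+1, 4 ∤ k+1, b² = c, and k+2 > q/2; (3) 4 ∣ k+1 and c ≠ 0; (4) 4 ∣ k+1, c = 0, and k+2 < q/2. -/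
/-!
A codeword agreeing with `u` at `k + 2` points exists exactly when some set `S` of `k + 2` field
elements has `e₁(S) = b` and `e₂(S) = c`; since `u - P` always has degree `k + 2`, no codeword
agrees with `u` at more points (`errDist_eq`). So the theorem is about the existence of `S`.

Put `n = k + 2`, which is odd. In characteristic two, translating `S` by `a` changes `e₁` by `a`
and, when `e₁(S) = 0`, changes `e₂` by `a ^ 2` if `n ≡ 3 [MOD 4]` and by `0` if `n ≡ 1 [MOD 4]`
(`shift_to`). Hence one may assume `b = 0`, with a new target `d` for `e₂`.

* If `d ≠ 0`, scaling by a square root reduces to finding `S` with `e₁ = 0` and `e₂ ≠ 0`. A union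
  of cosets of `{0, 1}` and one point has `e₁ = 0`, and exchanging one coset for another changes
  `e₂` (`exists_e2_ne_zero`).
* If `d = 0`, passing to the complement, which has the same `e₂` (`e2_compl`), reduces to
  `n ≡ 1 [MOD 4]` and `n < q / 2`. Cosets of a four-element additive subgroup have `e₁ = 0` and
  all the same `e₂`, so an even number of them contributes nothing. They are added to `{0}` or to a
  five-element set with `e₁ = e₂ = 0` (`exists_five`), according to `n` modulo `8`, and counting
  shows that enough cosets avoid the initial set (`exists_e2_zero`).
-/

open Polynomial Finset

/-- The second elementary symmetric function of the elements of `S`. -/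
def e2 {F : Type*} [Field F] (S : Finset F) : F := S.val.esymm 2

lemma e2_empty {F : Type*} [Field F] : e2 (∅ : Finset F) = 0 := by
  simp [e2, Multiset.esymm, Multiset.powersetCard_zero_right]

lemma e2_insert {F : Type*} [Field F] [DecidableEq F] {x : F} {S : Finset F} (h : x ∉ S) :
    e2 (insert x S) = e2 S + x * ∑ y ∈ S, y := by
  simp only [e2, Multiset.esymm, Finset.insert_val_of_notMem h, Multiset.powersetCard_cons,
    Multiset.map_add, Multiset.sum_add, Multiset.map_map, Multiset.powersetCard_one,
    Function.comp_def, Multiset.prod_cons, Multiset.prod_singleton]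
  rw [Multiset.sum_map_mul_left]
  simp

lemma e2_union {F : Type*} [Field F] [DecidableEq F] {S T : Finset F} (h : Disjoint S T) :
    e2 (S ∪ T) = e2 S + e2 T + (∑ y ∈ S, y) * ∑ y ∈ T, y := by
  induction T using Finset.induction_on with
  | empty => simp [e2_empty]
  | insert a T ha ih =>
    rw [Finset.disjoint_insert_right] at h
    have h1 : a ∉ S ∪ T := by simp [h.1, ha]
    rw [Finset.union_insert, e2_insert h1, ih h.2, e2_insert ha, Finset.sum_insert ha,
      Finset.sum_union h.2]
    ring

lemma e2_scale {F : Type*} [Field F] [DecidableEq F] {l : F} (hl : l ≠ 0) (S : Finset F) :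
    (S.image (l * ·)).card = S.card ∧ ∑ y ∈ S.image (l * ·), y = l * ∑ y ∈ S, y ∧
      e2 (S.image (l * ·)) = l ^ 2 * e2 S := by
  have hinj : Function.Injective (l * ·) := mul_right_injective₀ hl
  have hsum : ∀ S : Finset F, ∑ y ∈ S.image (l * ·), y = l * ∑ y ∈ S, y := fun S => by
    rw [Finset.sum_image hinj.injOn, Finset.mul_sum]
  refine ⟨Finset.card_image_of_injective _ hinj, hsum S, ?_⟩
  induction S using Finset.induction_on with
  | empty => simp [e2_empty]
  | insert a T ha ih =>
    have h1 : l * a ∉ T.image (l * ·) := by simpa [hl] using ha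
    rw [Finset.image_insert, e2_insert h1, ih, e2_insert ha, hsum]
    ring

/-- Effect of the translation by `a` on `e₁` and `e₂`. -/
lemma e2_shift {F : Type*} [Field F] [DecidableEq F] (a : F) (S : Finset F) :
    (S.image (a + ·)).card = S.card ∧ ∑ y ∈ S.image (a + ·), y = S.card * a + ∑ y ∈ S, y ∧
      e2 (S.image (a + ·)) =
        e2 S + (S.card - 1) * a * (∑ y ∈ S, y) + (S.card.choose 2 : ℕ) * a ^ 2 := by
  have hinj : Function.Injective (a + ·) := add_right_injective a
  have hsum : ∀ S : Finset F, ∑ y ∈ S.image (a + ·), y = S.card * a + ∑ y ∈ S, y := fun S => by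
    rw [Finset.sum_image hinj.injOn, Finset.sum_add_distrib]; simp
  refine ⟨Finset.card_image_of_injective _ hinj, hsum S, ?_⟩
  induction S using Finset.induction_on with
  | empty => simp [e2_empty]
  | insert x T ha ih =>
    have h1 : a + x ∉ T.image (a + ·) := by simpa using ha
    rw [Finset.image_insert, e2_insert h1, ih, e2_insert ha, hsum, Finset.sum_insert ha,
      Finset.card_insert_of_notMem ha, Nat.choose_succ_succ' T.card 1, Nat.choose_one_right]
    push_cast
    ring

/-- The monic polynomial with root set `S` begins `X^(k+2) - e₁ X^(k+1) + e₂ X^k`. -/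
lemma prod_expand {F : Type*} [Field F] (k : ℕ) (S : Finset F) (hS : S.card = k + 2) :
    (∏ x ∈ S, (X - C x) -
      (X ^ (k + 2) - C (∑ x ∈ S, x) * X ^ (k + 1) + C (e2 S) * X ^ k)).degree
        < (k : WithBot ℕ) := by
  rw [Polynomial.degree_lt_iff_coeff_zero]
  intro m hm
  have hc : Multiset.card S.val = k + 2 := hS
  have hdeg : (∏ x ∈ S, (X - C x)).natDegree = k + 2 := by
    rw [natDegree_finsetProd_X_sub_C_eq_card, hS]
  have key : ∀ j ≤ k + 2, (∏ x ∈ S, (X - C x)).coeff j =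
      (-1) ^ (k + 2 - j) * S.val.esymm (k + 2 - j) := by
    intro j hj
    have := Multiset.prod_X_sub_C_coeff S.val (k := j) (by omega)
    rw [hc] at this
    exact this
  simp only [coeff_sub, coeff_add, coeff_X_pow, coeff_C_mul]
  obtain rfl | rfl | rfl | h : m = k ∨ m = k + 1 ∨ m = k + 2 ∨ k + 2 < m := by omega
  · rw [key _ (by omega)]
    simp [e2]
  · rw [key _ (by omega)]
    simp [Multiset.esymm, Multiset.powersetCard_one]
  · rw [key _ (by omega)]
    simp [Multiset.esymm, Multiset.powersetCard_zero_left]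
  · rw [coeff_eq_zero_of_natDegree_lt (by omega)]
    simp [show m ≠ k + 2 by omega, show m ≠ k + 1 by omega, show m ≠ k by omega]

/-- If some `S` with `k + 2` elements has `e₁ = b` and `e₂ = c`, then `u` minus a suitable codeword
is the polynomial vanishing exactly on `S`, and this codeword is nearest to `u`. -/
lemma errDist_eq_s6 {F : Type*} [Field F] [Fintype F] [DecidableEq F]
    (k : ℕ) (b c : F) (v : F[X]) (hv : v.degree < (k : WithBot ℕ)) (u : F → F)
    (hu : ∀ x : F, u x = (X ^ (k + 2) - C b * X ^ (k + 1) + C c * X ^ k + v).eval x)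
    (hS : ∃ S : Finset F, S.card = k + 2 ∧ ∑ x ∈ S, x = b ∧ e2 S = c) :
    errDist u (RSCodeStd F k) = Fintype.card F - k - 2 := by
  obtain ⟨S, hcard, hb, hc⟩ := hS
  have hexp := prod_expand k S hcard
  rw [hb, hc] at hexp
  set r := ∏ x ∈ S, (X - C x) - (X ^ (k + 2) - C b * X ^ (k + 1) + C c * X ^ k) with hr
  have hdist : ∀ f : F → F, hammingDist u f + (univ.filter fun x => u x = f x).card
      = Fintype.card F := by
    intro f
    rw [add_comm]
    exact Finset.card_filter_add_card_filter_not (s := univ) (fun x => u x = f x)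
  apply le_antisymm
  · apply Nat.sInf_le
    refine ⟨fun x => (v - r).eval x, ⟨v - r, ?_, fun x => rfl⟩, ?_⟩
    · exact lt_of_le_of_lt (degree_sub_le _ _) (max_lt hv hexp)
    · have : (univ.filter fun x => u x = (v - r).eval x) = S := by
        ext x
        have h1 : u x - (v - r).eval x = ∏ y ∈ S, (x - y) := by
          rw [hu, ← eval_sub]
          have : X ^ (k + 2) - C b * X ^ (k + 1) + C c * X ^ k + v - (v - r)
              = ∏ x ∈ S, (X - C x) := by rw [hr]; ring
          rw [this, eval_prod]; simp
        rw [Finset.mem_filter, ← sub_eq_zero, h1, Finset.prod_eq_zero_iff]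
        simp [sub_eq_zero]
      have h2 := hdist (fun x => (v - r).eval x)
      rw [this, hcard] at h2
      omega
  · apply le_csInf
    · exact ⟨_, 0, ⟨0, by simp, by simp⟩, rfl⟩
    · rintro _ ⟨f, ⟨P, hP, hf⟩, rfl⟩
      have hlow : (-(C b * X ^ (k + 1)) + C c * X ^ k + (v - P)).degree
          < ((k + 2 : ℕ) : WithBot ℕ) := by
        rw [Polynomial.degree_lt_iff_coeff_zero]
        intro m hm
        have h1 : (v - P).coeff m = 0 := by
          apply coeff_eq_zero_of_degree_lt
          refine lt_of_lt_of_le (lt_of_le_of_lt (degree_sub_le _ _) (max_lt hv hP)) ?_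
          exact_mod_cast (by omega : k ≤ m)
        rw [coeff_add, h1]
        simp [coeff_X_pow, show m ≠ k + 1 by omega, show m ≠ k by omega]
      set g := X ^ (k + 2) + (-(C b * X ^ (k + 1)) + C c * X ^ k + (v - P)) with hg
      have hmon : g.Monic := monic_X_pow_add hlow
      have hnat : g.natDegree = k + 2 := by
        apply natDegree_eq_of_degree_eq_some
        rw [hg, degree_add_eq_left_of_degree_lt (by rwa [degree_X_pow]), degree_X_pow]
      have hsub : (univ.filter fun x => u x = f x) ⊆ g.roots.toFinset := by
        intro x hx
        rw [Finset.mem_filter] at hx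
        rw [Multiset.mem_toFinset, mem_roots hmon.ne_zero, IsRoot, hg]
        have := hx.2
        rw [hu, hf] at this
        simp only [eval_add, eval_sub, eval_neg] at this ⊢
        linear_combination this
      have h3 := (Finset.card_le_card hsub).trans
        ((Multiset.toFinset_card_le _).trans (card_roots' g))
      have := hdist f
      omega

/-- `m` cosets of `{0, 1}` avoiding `S₀`. -/
lemma fill_pairs {F : Type*} [Field F] [Fintype F] [DecidableEq F] [CharP F 2]
    (S₀ : Finset F) (m : ℕ) (h : 2 * (S₀.card + m) ≤ Fintype.card F) :
    ∃ T : Finset F, Disjoint S₀ T ∧ (∀ x ∈ T, x + 1 ∈ T) ∧ T.card = 2 * m ∧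
      ∑ y ∈ T, y = m := by
  have h2 : (2 : F) = 0 := CharTwo.two_eq_zero
  induction m with
  | zero => exact ⟨∅, by simp⟩
  | succ m ih =>
    obtain ⟨T, hd, hinv, hc, hs⟩ := ih (by omega)
    have hlt : ((S₀ ∪ S₀.image (· + 1)) ∪ T).card < Fintype.card F := by
      have := Finset.card_union_le (S₀ ∪ S₀.image (· + 1)) T
      have := Finset.card_union_le S₀ (S₀.image (· + 1))
      have := Finset.card_image_le (s := S₀) (f := (· + 1))
      omega
    obtain ⟨x, hx⟩ : ∃ x, x ∉ (S₀ ∪ S₀.image (· + 1)) ∪ T := by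
      by_contra! hall
      rw [Finset.eq_univ_of_forall hall, Finset.card_univ] at hlt
      exact lt_irrefl _ hlt
    simp only [Finset.mem_union, Finset.mem_image, not_or, not_exists, not_and] at hx
    obtain ⟨⟨hx1, hx2⟩, hx3⟩ := hx
    have e1 : x + 1 + 1 = x := by linear_combination h2
    have hy1 : x + 1 ∉ S₀ := fun hm => hx2 _ hm e1
    have hy3 : x + 1 ∉ T := fun hm => hx3 (e1 ▸ hinv _ hm)
    have hxy : x ∉ insert (x + 1) T := by simp [hx3]
    refine ⟨insert x (insert (x + 1) T), ?_, ?_, ?_, ?_⟩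
    · simp [Finset.disjoint_insert_right, hx1, hy1, hd]
    · intro z hz
      simp only [Finset.mem_insert] at hz ⊢
      rcases hz with rfl | rfl | hz
      · simp
      · simp [e1]
      · exact Or.inr (Or.inr (hinv z hz))
    · rw [Finset.card_insert_of_notMem hxy, Finset.card_insert_of_notMem hy3, hc]; ring
    · rw [Finset.sum_insert hxy, Finset.sum_insert hy3, hs]; push_cast; linear_combination x * h2

lemma exists_ne_zero_one {F : Type*} [Field F] [Fintype F] [DecidableEq F]
    (hq : 2 < Fintype.card F) : ∃ a : F, a ≠ 0 ∧ a ≠ 1 := by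
  by_contra! hall
  have : (Finset.univ : Finset F) ⊆ {0, 1} := by
    intro x _
    rw [Finset.mem_insert, Finset.mem_singleton]
    exact or_iff_not_imp_left.2 (hall x)
  have := (Finset.card_le_card this).trans Finset.card_le_two
  rw [Finset.card_univ] at this
  omega

/-- `m` cosets of the additive subgroup `{0, 1, a, a + 1}` avoiding `S₀`. Each coset has
`e₁ = 0` and `e₂ = a ^ 2 + a + 1`. -/
lemma fill_quads {F : Type*} [Field F] [Fintype F] [DecidableEq F] [CharP F 2]
    (a : F) (ha0 : a ≠ 0) (ha1 : a ≠ 1)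
    (S₀ : Finset F) (m : ℕ) (h : 4 * (S₀.card + m) ≤ Fintype.card F) :
    ∃ T : Finset F, Disjoint S₀ T ∧ (∀ x ∈ T, x + 1 ∈ T ∧ x + a ∈ T) ∧ T.card = 4 * m ∧
      ∑ y ∈ T, y = 0 ∧ e2 T = m * (a ^ 2 + a + 1) := by
  have h2 : (2 : F) = 0 := CharTwo.two_eq_zero
  induction m with
  | zero => exact ⟨∅, by simp [e2_empty]⟩
  | succ m ih =>
    obtain ⟨T, hd, hinv, hc, hs, he⟩ := ih (by omega)
    set V : Finset F := {0, 1, a, a + 1} with hV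
    -- `B` is the set of points whose coset meets `S₀`.
    set B : Finset F := (S₀ ×ˢ V).image (fun p => p.1 + p.2) with hB
    have hVc : V.card ≤ 4 := Finset.card_le_four
    have hBc : B.card ≤ S₀.card * 4 := by
      refine Finset.card_image_le.trans ?_
      rw [Finset.card_product]
      exact Nat.mul_le_mul_left _ hVc
    have hlt : (B ∪ T).card < Fintype.card F := by
      have := Finset.card_union_le B T
      omega
    obtain ⟨x, hx⟩ : ∃ x, x ∉ B ∪ T := by
      by_contra! hall
      rw [Finset.eq_univ_of_forall hall, Finset.card_univ] at hlt
      exact lt_irrefl _ hlt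
    rw [Finset.mem_union, not_or] at hx
    obtain ⟨hxB, hxT⟩ := hx
    have hxS : ∀ w ∈ V, x + w ∉ S₀ := by
      intro w hw hm
      apply hxB
      rw [hB, Finset.mem_image]
      exact ⟨(x + w, w), by simp [hm, hw], by simp only []; linear_combination w * h2⟩
    have h0S : x ∉ S₀ := by simpa using hxS 0 (by simp [hV])
    have h1S := hxS 1 (by simp [hV])
    have haS := hxS a (by simp [hV])
    have ha1S := hxS (a + 1) (by simp [hV])
    have e1 : x + 1 + 1 = x := by linear_combination h2
    have ea : x + a + a = x := by linear_combination a * h2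
    have ea1 : x + (a + 1) + 1 = x + a := by linear_combination h2
    have eaa : x + (a + 1) + a = x + 1 := by linear_combination a * h2
    have h1T : x + 1 ∉ T := fun hm => hxT (e1 ▸ (hinv _ hm).1)
    have haT : x + a ∉ T := fun hm => hxT (ea ▸ (hinv _ hm).2)
    have ha1T : x + (a + 1) ∉ T := fun hm => haT (ea1 ▸ (hinv _ hm).1)
    have n1 : x + a ∉ insert (x + (a + 1)) T := by simp [haT]
    have n2 : x + 1 ∉ insert (x + a) (insert (x + (a + 1)) T) := by
      simp [h1T, ha0, Ne.symm ha1]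
    have na : a + 1 ≠ 0 := fun hh => ha1 (by linear_combination hh - h2)
    have n3 : x ∉ insert (x + 1) (insert (x + a) (insert (x + (a + 1)) T)) := by
      simp [hxT, ha0, na]
    refine ⟨insert x (insert (x + 1) (insert (x + a) (insert (x + (a + 1)) T))),
      ?_, ?_, ?_, ?_, ?_⟩
    · simp [Finset.disjoint_insert_right, h0S, h1S, haS, ha1S, hd]
    · intro z hz
      simp only [Finset.mem_insert] at hz ⊢
      rcases hz with rfl | rfl | rfl | rfl | hz
      · simp
      · rw [e1]; simp [add_assoc, add_comm 1 a]
      · rw [ea]; simp [add_assoc]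
      · rw [ea1, eaa]; simp
      · simp [hinv z hz]
    · rw [Finset.card_insert_of_notMem n3, Finset.card_insert_of_notMem n2, Finset.card_insert_of_notMem n1,
        Finset.card_insert_of_notMem ha1T, hc]
      ring
    · rw [Finset.sum_insert n3, Finset.sum_insert n2, Finset.sum_insert n1, Finset.sum_insert ha1T, hs]
      linear_combination (2 * x + a + 1) * h2
    · rw [e2_insert n3, e2_insert n2, e2_insert n1, e2_insert ha1T,
        Finset.sum_insert n2, Finset.sum_insert n1, Finset.sum_insert ha1T, hs, he]
      push_cast
      linear_combination (3 * x ^ 2 + 3 * a * x + 3 * x + a) * h2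

/-- The sets `S = T ∪ {t, z, z + 1}`, with `T` a fixed union of cosets of `{0, 1}`, all have
`e₁ = 0`, and `e₂(S)` is `z * (z + 1)` plus a constant, so two cosets `{z, z + 1}` give two
different values. -/
lemma exists_e2_ne_zero {F : Type*} [Field F] [Fintype F] [DecidableEq F] [CharP F 2]
    (m : ℕ) (hm : 1 ≤ m) (hq : 2 * m + 4 ≤ Fintype.card F) :
    ∃ S : Finset F, S.card = 2 * m + 1 ∧ ∑ x ∈ S, x = 0 ∧ e2 S ≠ 0 := by
  have h2 : (2 : F) = 0 := CharTwo.two_eq_zero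
  obtain ⟨m, rfl⟩ : ∃ j, m = j + 1 := ⟨m - 1, by omega⟩
  obtain ⟨t, ht01, ht⟩ : ∃ t : F, (t = 0 ∨ t = 1) ∧ t = m + 1 := by
    rcases Nat.even_or_odd' (m + 1) with ⟨j, h | h⟩
    · refine ⟨0, Or.inl rfl, ?_⟩
      have : ((m + 1 : ℕ) : F) = (2 * j : ℕ) := by rw [h]
      push_cast at this
      linear_combination (-j : F) * h2 - this
    · refine ⟨1, Or.inr rfl, ?_⟩
      have : ((m + 1 : ℕ) : F) = (2 * j + 1 : ℕ) := by rw [h]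
      push_cast at this
      linear_combination (-j : F) * h2 - this
  have h01 : ({0, 1} : Finset F).card ≤ 2 := Finset.card_le_two
  obtain ⟨T, hd, hinv, hc, hs⟩ := fill_pairs ({0, 1} : Finset F) m (by omega)
  simp only [Finset.disjoint_insert_left, Finset.disjoint_singleton_left] at hd
  have htT : t ∉ T := by rcases ht01 with rfl | rfl <;> simp [hd]
  have avoid : ∀ B : Finset F, B.card ≤ 2 * m + 4 → ∃ x, x ∉ B := by
    intro B hB
    by_contra! hall
    rw [Finset.eq_univ_of_forall hall, Finset.card_univ] at hB
    omega
  have main : ∀ z : F, z ≠ 0 → z ≠ 1 → z ∉ T → ∃ S : Finset F, S.card = 2 * (m + 1) + 1 ∧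
      ∑ x ∈ S, x = 0 ∧ e2 S = z * (z + 1) + (e2 T + t * m + t + m) := by
    intro z hz0 hz1 hzT
    have hz' : z + 1 ≠ 0 := fun hh => hz1 (by linear_combination hh - h2)
    have e1 : z + 1 + 1 = z := by linear_combination h2
    have hz1T : z + 1 ∉ T := fun hm => hzT (e1 ▸ hinv _ hm)
    have n2 : z + 1 ∉ insert t T := by rcases ht01 with rfl | rfl <;> simp [hz1T, hz', hz0]
    have n3 : z ∉ insert (z + 1) (insert t T) := by
      rcases ht01 with rfl | rfl <;> simp [hzT, hz0, hz1]
    refine ⟨insert z (insert (z + 1) (insert t T)), ?_, ?_, ?_⟩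
    · rw [Finset.card_insert_of_notMem n3, Finset.card_insert_of_notMem n2,
        Finset.card_insert_of_notMem htT, hc]
      ring
    · rw [Finset.sum_insert n3, Finset.sum_insert n2, Finset.sum_insert htT, hs]
      linear_combination (z + m + 1) * h2 + ht
    · rw [e2_insert n3, e2_insert n2, e2_insert htT, Finset.sum_insert n2,
        Finset.sum_insert htT, hs]
      linear_combination (z * (t + m)) * h2
  obtain ⟨x, hx⟩ := avoid ({0, 1} ∪ T) (by have := Finset.card_union_le {0, 1} T; omega)
  obtain ⟨y, hy⟩ := avoid ({0, 1, x, x + 1} ∪ T) (by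
    have := Finset.card_union_le {0, 1, x, x + 1} T
    have : ({0, 1, x, x + 1} : Finset F).card ≤ 4 := Finset.card_le_four
    omega)
  simp only [Finset.mem_union, Finset.mem_insert, Finset.mem_singleton, not_or] at hx hy
  obtain ⟨⟨hx0, hx1⟩, hxT⟩ := hx
  obtain ⟨⟨hy0, hy1, hyx, hyx1⟩, hyT⟩ := hy
  obtain ⟨S, hS1, hS2, hS3⟩ := main x hx0 hx1 hxT
  obtain ⟨S', hS1', hS2', hS3'⟩ := main y hy0 hy1 hyT
  by_cases h0 : e2 S = 0
  · refine ⟨S', hS1', hS2', fun h0' => ?_⟩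
    have : (y - x) * (y - (x + 1)) = 0 := by
      linear_combination h0' - h0 + hS3 - hS3' + (x ^ 2 + x - y * x - y) * h2
    rcases mul_eq_zero.1 this with h | h
    · exact hyx (sub_eq_zero.1 h)
    · exact hyx1 (sub_eq_zero.1 h)
  · exact ⟨S, hS1, hS2, h0⟩

/-- The sets `{r, y, y + r + 1, x, x + 1}` have `e₁ = 0`. After the substitution
`x = w + 1 + r + y`, the equation `e₂ = 0` is `r * y = w ^ 2 + w + 1`, linear in `y`. For fixed
`w ≠ 0, 1`, at most eight values of `r` make two of the five elements coincide. -/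
lemma exists_five {F : Type*} [Field F] [Fintype F] [DecidableEq F] [CharP F 2]
    (hq : 8 < Fintype.card F) :
    ∃ S : Finset F, S.card = 5 ∧ ∑ x ∈ S, x = 0 ∧ e2 S = 0 := by
  have h2 : (2 : F) = 0 := CharTwo.two_eq_zero
  have avoid : ∀ B : Finset F, B.card ≤ 8 → ∃ x, x ∉ B := by
    intro B hB
    by_contra! hall
    rw [Finset.eq_univ_of_forall hall, Finset.card_univ] at hB
    omega
  obtain ⟨w, hw⟩ := avoid {0, 1} (Finset.card_le_two.trans (by norm_num))
  simp only [Finset.mem_insert, Finset.mem_singleton, not_or] at hw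
  obtain ⟨hw0, hw1⟩ := hw
  have hw1' : w + 1 ≠ 0 := fun hh => hw1 (by linear_combination hh - h2)
  obtain ⟨d, hd⟩ := FiniteField.isSquare_of_char_two (ringChar.eq F 2) (w ^ 2 + w + 1)
  obtain ⟨r, hr⟩ := avoid {0, 1, w, w + 1, d, w ^ 2 + w + 1, (w ^ 2 + w + 1) / (w + 1),
    (w ^ 2 + w + 1) / w} ((Finset.card_insert_le _ _).trans
    (Nat.succ_le_succ ((Finset.card_insert_le _ _).trans (Nat.succ_le_succ Finset.card_le_six))))
  simp only [Finset.mem_insert, Finset.mem_singleton, not_or] at hr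
  obtain ⟨r0, r1, r2, r3, r4, r5, r6, r7⟩ := hr
  rw [eq_div_iff hw1'] at r6
  rw [eq_div_iff hw0] at r7
  obtain ⟨y, hy⟩ : ∃ y, r * y = w ^ 2 + w + 1 := ⟨(w ^ 2 + w + 1) / r, by field_simp⟩
  obtain ⟨x, hx⟩ : ∃ x, x = w + 1 + r + y := ⟨_, rfl⟩
  have m4 : x ∉ ({x + 1} : Finset F) := by simp
  have m3 : y + r + 1 ∉ ({x, x + 1} : Finset F) := by
    simp only [Finset.mem_insert, Finset.mem_singleton, not_or]
    constructor <;> grind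
  have m2 : y ∉ ({y + r + 1, x, x + 1} : Finset F) := by
    simp only [Finset.mem_insert, Finset.mem_singleton, not_or]
    refine ⟨?_, ?_, ?_⟩ <;> grind
  have m1 : r ∉ ({y, y + r + 1, x, x + 1} : Finset F) := by
    simp only [Finset.mem_insert, Finset.mem_singleton, not_or]
    refine ⟨?_, ?_, ?_, ?_⟩
    · intro h
      have : (r - d) * (r - d) = 0 := by
        linear_combination hd + hy + r * h + (d * d - r * d) * h2
      exact r4 (sub_eq_zero.1 (mul_self_eq_zero.1 this))
    · grind
    · grind
    · grind
  refine ⟨{r, y, y + r + 1, x, x + 1}, ?_, ?_, ?_⟩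
  · rw [Finset.card_insert_of_notMem m1, Finset.card_insert_of_notMem m2,
      Finset.card_insert_of_notMem m3, Finset.card_insert_of_notMem m4, Finset.card_singleton]
  · rw [Finset.sum_insert m1, Finset.sum_insert m2, Finset.sum_insert m3, Finset.sum_insert m4,
      Finset.sum_singleton]
    linear_combination (r + y + x + 1) * h2
  · rw [e2_insert m1, e2_insert m2, e2_insert m3, e2_insert m4, ← insert_empty_eq (x + 1),
      e2_insert (Finset.notMem_empty _), e2_empty, insert_empty_eq, Finset.sum_insert m2,
      Finset.sum_insert m3, Finset.sum_insert m4, Finset.sum_singleton, Finset.sum_empty]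
    grind

/-- A set of size `1` or `5` (according to `n` modulo `8`) with `e₁ = e₂ = 0`, enlarged by an even
number of cosets of a four-element subgroup. -/
lemma exists_e2_zero {F : Type*} [Field F] [Fintype F] [DecidableEq F] [CharP F 2]
    (n : ℕ) (hn : n % 4 = 1) (hn5 : 5 ≤ n) (h8 : 8 ∣ Fintype.card F)
    (hq : 2 * n < Fintype.card F) :
    ∃ S : Finset F, S.card = n ∧ ∑ x ∈ S, x = 0 ∧ e2 S = 0 := by
  obtain ⟨a, ha0, ha1⟩ := exists_ne_zero_one (F := F) (by omega)
  obtain ⟨S₀, l, hn', hl, hs, he⟩ : ∃ (S₀ : Finset F) (l : ℕ), n = S₀.card + 8 * l ∧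
      (l = 0 ∨ 4 * (S₀.card + 2 * l) ≤ Fintype.card F) ∧ ∑ x ∈ S₀, x = 0 ∧ e2 S₀ = 0 := by
    rcases (by omega : n % 8 = 1 ∨ n % 8 = 5) with h | h
    · refine ⟨{0}, n / 8, by simp; omega, by simp; omega, by simp, ?_⟩
      rw [← insert_empty_eq, e2_insert (Finset.notMem_empty _), e2_empty]
      simp
    · obtain ⟨S, h1, h2, h3⟩ := exists_five (F := F) (by omega)
      exact ⟨S, n / 8, by omega, by omega, h2, h3⟩
  -- When `l = 0` the counting bound for the cosets may fail, but no coset is needed.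
  rcases Nat.eq_zero_or_pos l with rfl | hl0
  · exact ⟨S₀, by omega, hs, he⟩
  obtain ⟨T, hd, -, hTc, hTs, hTe⟩ := fill_quads a ha0 ha1 S₀ (2 * l) (by omega)
  refine ⟨S₀ ∪ T, ?_, ?_, ?_⟩
  · rw [Finset.card_union_of_disjoint hd, hTc]; omega
  · rw [Finset.sum_union hd, hs, hTs, add_zero]
  · rw [e2_union hd, hs, he, hTe]
    push_cast
    linear_combination (l * (a ^ 2 + a + 1)) * (CharTwo.two_eq_zero : (2 : F) = 0)

/-- The whole field is a union of an even number of cosets of a four-element subgroup, hence has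
`e₁ = e₂ = 0`. -/
lemma e2_compl {F : Type*} [Field F] [Fintype F] [DecidableEq F] [CharP F 2]
    (h8 : 8 ∣ Fintype.card F) (S : Finset F) (h1 : ∑ x ∈ S, x = 0) :
    ∑ x ∈ Sᶜ, x = 0 ∧ e2 Sᶜ = e2 S := by
  have h2 : (2 : F) = 0 := CharTwo.two_eq_zero
  have hpos : 0 < Fintype.card F := Fintype.card_pos
  obtain ⟨a, ha0, ha1⟩ := exists_ne_zero_one (F := F) (by omega)
  obtain ⟨l, hl⟩ := h8
  obtain ⟨T, -, -, hTc, hTs, hTe⟩ := fill_quads a ha0 ha1 (∅ : Finset F) (2 * l)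
    (by simp; omega)
  have hT : T = S ∪ Sᶜ := by
    rw [Finset.union_compl, ← Finset.card_eq_iff_eq_univ]
    omega
  have hd : Disjoint S Sᶜ := disjoint_compl_right
  rw [hT, Finset.sum_union hd, h1] at hTs
  rw [hT, e2_union hd, h1] at hTe
  push_cast at hTe
  exact ⟨by simpa using hTs, by linear_combination hTe + (l * (a ^ 2 + a + 1) - e2 S) * h2⟩

/-- For odd `n`, `e₁ = 0` can be moved to `e₁ = b`; then `n.choose 2` is even exactly when
`n % 4 = 1`. -/
lemma shift_to {F : Type*} [Field F] [DecidableEq F] [CharP F 2] {n : ℕ} (hn : n % 2 = 1)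
    (b : F) {S : Finset F} (hc : S.card = n) (hs : ∑ x ∈ S, x = 0) :
    ∃ S' : Finset F, S'.card = n ∧ ∑ x ∈ S', x = b ∧
      e2 S' = e2 S + if n % 4 = 1 then 0 else b ^ 2 := by
  have h2 : (2 : F) = 0 := CharTwo.two_eq_zero
  obtain ⟨h1, h3, h4⟩ := e2_shift b S
  refine ⟨_, h1.trans hc, h3.trans ?_, h4.trans ?_⟩
  · rw [hs, hc]
    obtain ⟨j, rfl⟩ : ∃ j, n = 2 * j + 1 := ⟨n / 2, by omega⟩
    push_cast
    linear_combination j * b * h2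
  · rw [hs, hc, Nat.choose_two_right]
    split_ifs with h
    · obtain ⟨j, rfl⟩ : ∃ j, n = 4 * j + 1 := ⟨n / 4, by omega⟩
      have : (4 * j + 1) * (4 * j + 1 - 1) / 2 = 2 * (j * (4 * j + 1)) := by
        rw [Nat.add_sub_cancel]
        apply Nat.div_eq_of_eq_mul_left (by norm_num)
        ring
      rw [this]
      push_cast
      linear_combination (j * (4 * j + 1) * b ^ 2) * h2
    · obtain ⟨j, rfl⟩ : ∃ j, n = 4 * j + 3 := ⟨n / 4, by omega⟩
      have : (4 * j + 3) * (4 * j + 3 - 1) / 2 = 2 * (4 * j ^ 2 + 5 * j + 1) + 1 := by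
        rw [show 4 * j + 3 - 1 = 4 * j + 2 by omega]
        apply Nat.div_eq_of_eq_mul_left (by norm_num)
        ring
      rw [this]
      push_cast
      linear_combination ((4 * j ^ 2 + 5 * j + 1) * b ^ 2) * h2

/-- Every nonzero value of `e₂` occurs: scaling by `l` multiplies `e₂` by `l ^ 2`, and every
element of `F` is a square. -/
lemma exists_e2_eq {F : Type*} [Field F] [Fintype F] [DecidableEq F] [CharP F 2]
    (m : ℕ) (hm : 1 ≤ m) (hq : 2 * m + 4 ≤ Fintype.card F) (d : F) (hd : d ≠ 0) :
    ∃ S : Finset F, S.card = 2 * m + 1 ∧ ∑ x ∈ S, x = 0 ∧ e2 S = d := by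
  obtain ⟨S, h1, h2, h3⟩ := exists_e2_ne_zero (F := F) m hm hq
  obtain ⟨l, hl⟩ := FiniteField.isSquare_of_char_two (ringChar.eq F 2) (d / e2 S)
  have hl0 : l ≠ 0 := by
    rintro rfl
    rw [mul_zero, div_eq_zero_iff] at hl
    tauto
  obtain ⟨h4, h5, h6⟩ := e2_scale hl0 S
  refine ⟨_, h4.trans h1, by rw [h5, h2, mul_zero], ?_⟩
  rw [h6, pow_two, ← hl, div_mul_cancel₀ _ h3]

/-- for `q` a power of 2 (i.e. characteristic 2), the standard
Reed-Solomon code `C_q` with `k + 2 ≤ q - 2`, and a received word `u` with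
interpolation polynomial `x^{k+2} - b x^{k+1} + c x^k + v(x)`,
`deg v ≤ k - 1`: `d(u, C_q) = q - k - 2` if one of the following holds:
(1) `2 ∣ k+1`, `4 ∤ k+1`, `b² ≠ c`; (2) `2 ∣ k+1`, `4 ∤ k+1`, `b² = c`,
`k+2 > q/2`; (3) `4 ∣ k+1`, `c ≠ 0`; (4) `4 ∣ k+1`, `c = 0`, `k+2 < q/2`.
(The inequalities `k+2 > q/2` and `k+2 < q/2` are expressed as
`2*(k+2) > q` and `2*(k+2) < q`.) -/
theorem stmt_6 {F : Type*} [Field F] [Fintype F] [DecidableEq F] [CharP F 2]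
    (k : ℕ) (hk : 1 ≤ k) (hk2 : k + 2 ≤ Fintype.card F - 2)
    (b c : F) (v : F[X]) (hv : v.degree < (k : WithBot ℕ))
    (u : F → F)
    (hu : ∀ x : F, u x = (X ^ (k + 2) - C b * X ^ (k + 1) + C c * X ^ k + v).eval x)
    (hcond :
      (2 ∣ k + 1 ∧ ¬ (4 ∣ k + 1) ∧ b ^ 2 ≠ c) ∨
      (2 ∣ k + 1 ∧ ¬ (4 ∣ k + 1) ∧ b ^ 2 = c ∧ 2 * (k + 2) > Fintype.card F) ∨
      (4 ∣ k + 1 ∧ c ≠ 0) ∨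
      (4 ∣ k + 1 ∧ c = 0 ∧ 2 * (k + 2) < Fintype.card F)) :
    errDist u (RSCodeStd F k) = Fintype.card F - k - 2 := by
  have h2 : (2 : F) = 0 := CharTwo.two_eq_zero
  apply errDist_eq_s6 k b c v hv u hu
  -- The power of two `q` is at least `k + 4 ≥ 5`.
  have h8 : 8 ∣ Fintype.card F := by
    obtain ⟨e, -, he⟩ := FiniteField.card F 2
    rw [he] at hk2 ⊢
    have : 3 ≤ (e : ℕ) := by
      by_contra! hlt
      have hpow : 2 ^ (e : ℕ) ≤ 2 ^ 2 := Nat.pow_le_pow_right (by norm_num) (by omega)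
      omega
    exact pow_dvd_pow 2 this
  have h2k : 2 ∣ k + 1 := by omega
  obtain ⟨m, hm⟩ : ∃ m, k + 2 = 2 * m + 1 := ⟨(k + 1) / 2, by omega⟩
  rcases hcond with ⟨-, h4, hbc⟩ | ⟨-, h4, hbc, hlarge⟩ | ⟨h4, hc⟩ | ⟨h4, hc, hsmall⟩
  · obtain ⟨S, h1, hs, he⟩ := exists_e2_eq (F := F) m (by omega) (by omega) (c - b ^ 2)
      (sub_ne_zero.2 hbc.symm)
    obtain ⟨S', h1', hs', he'⟩ := shift_to (n := k + 2) (by omega) b (h1.trans hm.symm) hs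
    rw [if_neg (by omega), he] at he'
    exact ⟨S', h1', hs', by rw [he']; ring⟩
  · -- The complement has `q - k - 2 < q / 2` elements, a number congruent to `1` modulo `4`.
    obtain ⟨S, h1, hs, he⟩ := exists_e2_zero (F := F) (Fintype.card F - (k + 2)) (by omega)
      (by omega) h8 (by omega)
    obtain ⟨hs2, he2⟩ := e2_compl h8 S hs
    have hcard : Sᶜ.card = k + 2 := by rw [Finset.card_compl, h1]; omega
    obtain ⟨S', h1', hs', he'⟩ := shift_to (n := k + 2) (by omega) b hcard hs2
    rw [if_neg (by omega), he2, he] at he'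
    exact ⟨S', h1', hs', by rw [he', zero_add, hbc]⟩
  · obtain ⟨S, h1, hs, he⟩ := exists_e2_eq (F := F) m (by omega) (by omega) c hc
    obtain ⟨S', h1', hs', he'⟩ := shift_to (n := k + 2) (by omega) b (h1.trans hm.symm) hs
    rw [if_pos (by omega), he] at he'
    exact ⟨S', h1', hs', by rw [he', add_zero]⟩
  · obtain ⟨S, h1, hs, he⟩ := exists_e2_zero (F := F) (k + 2) (by omega) (by omega) h8 hsmall
    obtain ⟨S', h1', hs', he'⟩ := shift_to (n := k + 2) (by omega) b h1 hs
    rw [if_pos (by omega), he] at he'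
    exact ⟨S', h1', hs', by rw [he', add_zero, hc]⟩
end

section
/- Let q be a power of 2, let C_q be the standard Reed-Solomon code of dimension k ≥ 1 over F_q with k+2 ≤ q−2, and let u ∈ F_q^q be a received word whose interpolation polynomial is u(x) = x^{k+2} − b x^{k+1} + c x^k + v(x) with deg v(x) ≤ k−1 and b,c ∈ F_q. Then d(u,C_q) ≤ q−k−1 if (k,b,c) satisfies one of the following: (1) 4 ∣ k+1, c = 0, and k+2 ≥ q/2; (2) 4 ∣ k; (3) 2 ∣ k, 4 ∤ k, and b ≠ 0; (4) 2 ∣ k, 4 ∤ k, and c ≠ 0; (5) 2 ∣ k, 4 ∤ k, b = c = 0, and k+1 > q/2. -/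
/-!
The distance bound asks for a polynomial `X^(k+2) - b X^(k+1) + c X^k + (lower terms)` with `k + 1`
distinct roots in `F`.  Writing the remaining root as `b - e₁(S)`, this amounts to a set `S ⊆ F` of
`k + 1` elements with `e₂(S) + e₁(S)² + b e₁(S) = c` (`errDist_le_of_set`).

Put `m = |S|`.  Replacing `S` by `S + t` adds `m t` to `e₁` and `(m - 1) t e₁ + (m choose 2) t²` to
`e₂`, and scaling by `l` multiplies `e₁`, `e₂` by `l`, `l²`.  In characteristic two:

* `m ≡ 0 (mod 4)`: `e₁` is translation invariant and `e₂` changes by `t e₁`, so any `S` with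
  `e₁(S) ≠ 0` can be translated to a solution;
* `m ≡ 1 (mod 4)`: `e₂` is invariant and `e₁` becomes arbitrary; scaling a set with `e₂ ≠ 0` makes
  `e₂` equal to any nonzero value of `c + s² + b s`, and a translation then gives `e₁ = s`;
* `m ≡ 3 (mod 4)`: `e₂ + e₁²` is invariant, so `b ≠ 0` is solved by a translation, and
  `b = 0 ≠ c` by scaling a set with `e₂ + e₁² ≠ 0`.

What remains is `m ≡ 3 (mod 4)`, `b = c = 0`.  As `e₁` and `e₂` of the whole field vanish,
`e₂(S) + e₁(S)² = e₂(Sᶜ)`, so a set `R` of `q - m ≡ 1 (mod 4)` elements with `e₂(R) = 0` is needed.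
Cosets of an additive subgroup `U` of order `8` have `e₁ = e₂ = 0`, hence `R` can be taken to be a
union of such cosets together with `{0}` or with a five-element set having `e₂ = 0`
(`exists_compl`).
-/

open Polynomial Finset

section Helpers

set_option linter.unusedSectionVars false

variable {F : Type*} [Field F]

/-- The second elementary symmetric function of the elements of a finite set. -/
noncomputable def esymmTwo (S : Finset F) : F := S.val.esymm 2

lemma esymm_one_eq (s : Multiset F) : s.esymm 1 = s.sum := by
  simp [Multiset.esymm, Multiset.powersetCard_one]

lemma esymm_two_cons (a : F) (s : Multiset F) :
    (a ::ₘ s).esymm 2 = s.esymm 2 + a * s.sum := by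
  rw [← esymm_one_eq]
  simp [Multiset.esymm, Multiset.powersetCard_cons, Multiset.map_map, Multiset.sum_map_mul_left]

lemma esymmTwo_empty : esymmTwo (∅ : Finset F) = 0 := by
  simp [esymmTwo, Multiset.esymm, Multiset.powersetCard_zero_right]

variable [DecidableEq F]

lemma esymmTwo_insert {a : F} {S : Finset F} (h : a ∉ S) :
    esymmTwo (insert a S) = esymmTwo S + a * ∑ x ∈ S, x := by
  unfold esymmTwo
  rw [Finset.insert_val_of_notMem h, esymm_two_cons, Finset.sum_val]
  rfl

lemma esymmTwo_union {A B : Finset F} (h : Disjoint A B) :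
    esymmTwo (A ∪ B) = esymmTwo A + esymmTwo B + (∑ x ∈ A, x) * ∑ x ∈ B, x := by
  induction A using Finset.induction_on with
  | empty => simp [esymmTwo_empty]
  | insert a A ha ih =>
    rw [Finset.disjoint_insert_left] at h
    have hn : a ∉ A ∪ B := by simp [ha, h.1]
    rw [Finset.insert_union, esymmTwo_insert hn, esymmTwo_insert ha, ih h.2,
      Finset.sum_union h.2, Finset.sum_insert ha]
    ring

lemma sum_shift (S : Finset F) (t : F) :
    ∑ x ∈ S.image (· + t), x = (∑ x ∈ S, x) + (#S : F) * t := by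
  rw [Finset.sum_image (fun x _ y _ h => add_right_cancel h), Finset.sum_add_distrib]
  simp

lemma card_shift (S : Finset F) (t : F) : #(S.image (· + t)) = #S :=
  Finset.card_image_of_injective _ (add_left_injective t)

lemma esymmTwo_shift (S : Finset F) (t : F) :
    esymmTwo (S.image (· + t)) = esymmTwo S + ((#S : F) - 1) * t * (∑ x ∈ S, x)
      + ((#S).choose 2 : F) * t ^ 2 := by
  induction S using Finset.induction_on with
  | empty => simp [esymmTwo_empty]
  | insert a S ha ih =>
    have hn : a + t ∉ S.image (· + t) := by simpa using ha
    rw [Finset.image_insert, esymmTwo_insert hn, ih, sum_shift, esymmTwo_insert ha,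
      Finset.sum_insert ha, Finset.card_insert_of_notMem ha, Nat.choose_succ_succ' _ 1,
      Nat.choose_one_right]
    push_cast
    ring

lemma card_scale (S : Finset F) {l : F} (hl : l ≠ 0) : #(S.image (l * ·)) = #S :=
  Finset.card_image_of_injective _ (mul_right_injective₀ hl)

lemma sum_scale (S : Finset F) {l : F} (hl : l ≠ 0) :
    ∑ x ∈ S.image (l * ·), x = l * ∑ x ∈ S, x := by
  rw [Finset.sum_image (fun x _ y _ h => mul_left_cancel₀ hl h), Finset.mul_sum]

lemma esymmTwo_scale (S : Finset F) {l : F} (hl : l ≠ 0) :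
    esymmTwo (S.image (l * ·)) = l ^ 2 * esymmTwo S := by
  induction S using Finset.induction_on with
  | empty => simp [esymmTwo_empty]
  | insert a S ha ih =>
    have hn : l * a ∉ S.image (l * ·) := by simpa [hl] using ha
    rw [Finset.image_insert, esymmTwo_insert hn, ih, sum_scale S hl, esymmTwo_insert ha]
    ring

variable [Fintype F]

/-! ### From sets to codewords -/

/-- A suitable set `S` of `k + 1` elements yields a codeword agreeing with `u` on `S`: subtract from
`u` the polynomial with roots `S` and `b - e₁(S)`. -/
lemma errDist_le_of_set [CharP F 2] (k : ℕ) (b c : F) (v : F[X]) (hv : v.degree < (k : WithBot ℕ))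
    (u : F → F)
    (hu : ∀ x : F, u x = (X ^ (k + 2) - C b * X ^ (k + 1) + C c * X ^ k + v).eval x)
    (S : Finset F) (hS : #S = k + 1)
    (h : esymmTwo S + (∑ x ∈ S, x) ^ 2 + b * ∑ x ∈ S, x = c) :
    errDist u (RSCodeStd F k) ≤ Fintype.card F - k - 1 := by
  have h2 : (2 : F) = 0 := CharTwo.two_eq_zero
  set s : Multiset F := (b - ∑ x ∈ S, x) ::ₘ S.val with hs
  have hcard : Multiset.card s = k + 2 := by
    rw [hs, Multiset.card_cons, Finset.card_val, hS]
  have hsum : S.val.sum = ∑ x ∈ S, x := Finset.sum_val S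
  set g : F[X] := (s.map fun t => X - C t).prod with hg
  have hgdeg : g.natDegree = k + 2 := by
    rw [hg, natDegree_multiset_prod_X_sub_C_eq_card, hcard]
  have hgm : g.Monic := monic_multiset_prod_of_monic _ _ fun a _ => monic_X_sub_C a
  have g2 : g.coeff (k + 2) = 1 := by rw [← hgdeg]; exact hgm
  have g1 : g.coeff (k + 1) = -b := by
    rw [hg, Multiset.prod_X_sub_C_coeff _ (by omega), hcard,
      show k + 2 - (k + 1) = 1 by omega, esymm_one_eq, hs, Multiset.sum_cons, hsum]
    ring
  have g0 : g.coeff k = c := by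
    rw [hg, Multiset.prod_X_sub_C_coeff _ (by omega), hcard,
      show k + 2 - k = 2 by omega, hs, esymm_two_cons, hsum, ← h]
    unfold esymmTwo
    linear_combination (-(∑ x ∈ S, x) ^ 2) * h2
  have hgS : ∀ x ∈ S, g.eval x = 0 := by
    intro x hx
    rw [hg, eval_multiset_prod, Multiset.map_map]
    apply Multiset.prod_eq_zero
    rw [Multiset.mem_map]
    exact ⟨x, by rw [hs]; exact Multiset.mem_cons_of_mem hx, by simp⟩
  set P : F[X] := X ^ (k + 2) - C b * X ^ (k + 1) + C c * X ^ k + v - g with hP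
  have hPdeg : P.degree < (k : WithBot ℕ) := by
    rw [degree_lt_iff_coeff_zero]
    intro m hm
    have hvm : v.coeff m = 0 := (degree_lt_iff_coeff_zero _ _).1 hv m hm
    rw [hP]
    simp only [coeff_sub, coeff_add, coeff_C_mul, coeff_X_pow, hvm]
    rcases Nat.lt_or_ge (k + 2) m with h3 | h3
    · rw [coeff_eq_zero_of_natDegree_lt (by omega : g.natDegree < m)]
      simp [show m ≠ k + 2 by omega, show m ≠ k + 1 by omega, show m ≠ k by omega]
    · obtain rfl | rfl | rfl : m = k ∨ m = k + 1 ∨ m = k + 2 := by omega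
      · simp [g0]
      · simp [g1]
      · simp [g2]
  have hmem : (fun x => P.eval x) ∈ RSCodeStd F k := ⟨P, hPdeg, fun _ => rfl⟩
  refine (Nat.sInf_le (Set.mem_image_of_mem (hammingDist u) hmem)).trans ?_
  have hsub : (Finset.univ.filter fun x => u x ≠ P.eval x) ⊆ Sᶜ := by
    intro x hx
    rw [Finset.mem_compl]
    intro hxS
    apply (Finset.mem_filter.1 hx).2
    rw [hu, hP, eval_sub _ _ x, hgS x hxS, sub_zero]
  have := Finset.card_le_card hsub
  rw [Finset.card_compl, hS] at this
  have h4 : hammingDist u (fun x => P.eval x) = #(Finset.univ.filter fun x => u x ≠ P.eval x) := rfl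
  omega

/-! ### Sets with nonvanishing invariants -/

lemma exists_sum_ne (m : ℕ) (hm : 1 ≤ m) (hm2 : m < Fintype.card F) :
    ∃ S : Finset F, #S = m ∧ ∑ x ∈ S, x ≠ 0 := by
  obtain ⟨T, -, hT⟩ := Finset.exists_subset_card_eq (s := (Finset.univ : Finset F)) (n := m - 1)
    (by rw [Finset.card_univ]; omega)
  have hc : 1 < #Tᶜ := by rw [Finset.card_compl]; omega
  obtain ⟨a, ha, a', ha', hne⟩ := Finset.one_lt_card.1 hc
  rw [Finset.mem_compl] at ha ha'
  by_contra! hcon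
  have h1 := hcon (insert a T) (by rw [Finset.card_insert_of_notMem ha]; omega)
  have h2 := hcon (insert a' T) (by rw [Finset.card_insert_of_notMem ha']; omega)
  rw [Finset.sum_insert ha] at h1
  rw [Finset.sum_insert ha'] at h2
  exact hne (by linear_combination h1 - h2)

lemma exists_esymmTwo_ne (m : ℕ) (hm : 2 ≤ m) (hm2 : m < Fintype.card F) :
    ∃ S : Finset F, #S = m ∧ esymmTwo S ≠ 0 := by
  obtain ⟨T, hT, hT0⟩ := exists_sum_ne (F := F) (m - 1) (by omega) (by omega)
  have hc : 1 < #Tᶜ := by rw [Finset.card_compl]; omega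
  obtain ⟨a, ha, a', ha', hne⟩ := Finset.one_lt_card.1 hc
  rw [Finset.mem_compl] at ha ha'
  by_contra! hcon
  have h1 := hcon (insert a T) (by rw [Finset.card_insert_of_notMem ha]; omega)
  have h2 := hcon (insert a' T) (by rw [Finset.card_insert_of_notMem ha']; omega)
  rw [esymmTwo_insert ha] at h1
  rw [esymmTwo_insert ha'] at h2
  have h3 : (a - a') * ∑ x ∈ T, x = 0 := by linear_combination h1 - h2
  rcases mul_eq_zero.1 h3 with h | h
  · exact hne (sub_eq_zero.1 h)
  · exact hT0 h

lemma exists_inv_ne [CharP F 2] (m : ℕ) (hm : 1 ≤ m) (hm2 : m + 1 < Fintype.card F) :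
    ∃ S : Finset F, #S = m ∧ esymmTwo S + (∑ x ∈ S, x) ^ 2 ≠ 0 := by
  have h2 : (2 : F) = 0 := CharTwo.two_eq_zero
  obtain ⟨T, -, hT⟩ := Finset.exists_subset_card_eq (s := (Finset.univ : Finset F)) (n := m - 1)
    (by rw [Finset.card_univ]; omega)
  have hc : 2 < #Tᶜ := by rw [Finset.card_compl]; omega
  obtain ⟨x, y, z, hx, hy, hz, hxy, hxz, hyz⟩ := Finset.two_lt_card_iff.1 hc
  by_contra! hcon
  -- As a function of the inserted element the invariant is a monic quadratic.
  have key : ∀ a ∈ Tᶜ, esymmTwo T + a * (∑ x ∈ T, x) + (a + ∑ x ∈ T, x) ^ 2 = 0 := by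
    intro a ha
    rw [Finset.mem_compl] at ha
    have h1 := hcon (insert a T) (by rw [Finset.card_insert_of_notMem ha]; omega)
    rwa [esymmTwo_insert ha, Finset.sum_insert ha] at h1
  have h3 : (x - y) * (x + y + 3 * ∑ x ∈ T, x) = 0 := by
    linear_combination key x hx - key y hy
  have h4 : (x - z) * (x + z + 3 * ∑ x ∈ T, x) = 0 := by
    linear_combination key x hx - key z hz
  have h5 := (mul_eq_zero.1 h3).resolve_left (sub_ne_zero.2 hxy)
  have h6 := (mul_eq_zero.1 h4).resolve_left (sub_ne_zero.2 hxz)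
  exact hyz (by linear_combination h5 - h6)

lemma exists_sq_eq [CharP F 2] (x : F) : ∃ l : F, l ^ 2 = x := by
  have : Function.Surjective fun l : F => l ^ 2 :=
    Finite.surjective_of_injective CharTwo.sq_injective
  exact this x

/-! ### The whole field and complements -/

lemma exists_ne_zero_one_s7 (hq : 2 < Fintype.card F) : ∃ l : F, l ≠ 0 ∧ l ≠ 1 := by
  have : ∃ l, l ∉ ({0, 1} : Finset F) := by
    by_contra! h
    have h1 := Finset.card_le_card (fun x _ => h x : (Finset.univ : Finset F) ⊆ {0, 1})
    rw [Finset.card_univ] at h1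
    have := Finset.card_le_two (a := (0 : F)) (b := 1)
    omega
  obtain ⟨l, hl⟩ := this
  exact ⟨l, by simpa using hl⟩

/-- The field is invariant under scaling, hence its `e₁` and `e₂` vanish, which relates the `e₂` of a
set to that of its complement. -/
lemma esymmTwo_compl [CharP F 2] (hq : 2 < Fintype.card F) (R : Finset F) :
    esymmTwo Rᶜ + (∑ x ∈ Rᶜ, x) ^ 2 = esymmTwo R := by
  have h2 : (2 : F) = 0 := CharTwo.two_eq_zero
  obtain ⟨l, hl0, hl1⟩ := exists_ne_zero_one_s7 hq
  have hu : (Finset.univ : Finset F).image (l * ·) = Finset.univ :=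
    Finset.image_univ_of_surjective (mul_left_surjective₀ hl0)
  have s1 := sum_scale (Finset.univ : Finset F) hl0
  have s2 := esymmTwo_scale (Finset.univ : Finset F) hl0
  rw [hu] at s1 s2
  have t1 : (∑ x : F, x) = 0 := by
    have : (l - 1) * (∑ x : F, x) = 0 := by linear_combination -s1
    exact (mul_eq_zero.1 this).resolve_left (sub_ne_zero.2 hl1)
  have t2 : esymmTwo (Finset.univ : Finset F) = 0 := by
    have : (l - 1) * ((l - 1) * esymmTwo (Finset.univ : Finset F)) = 0 := by
      linear_combination -s2 + (1 - l) * esymmTwo (Finset.univ : Finset F) * h2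
    exact ((mul_eq_zero.1 ((mul_eq_zero.1 this).resolve_left
      (sub_ne_zero.2 hl1))).resolve_left (sub_ne_zero.2 hl1))
  have hd : Disjoint R Rᶜ := disjoint_compl_right
  have hun : R ∪ Rᶜ = Finset.univ := Finset.union_compl R
  have e1 := Finset.sum_union hd (f := fun x => x)
  have e2 := esymmTwo_union hd
  rw [hun] at e1 e2
  linear_combination -e2 + t2 + (∑ x ∈ Rᶜ, x) * (t1 - e1) - esymmTwo R * h2 - (∑ x ∈ R, x) * (∑ x ∈ Rᶜ, x) * h2

/-! ### Sets with vanishing second symmetric function -/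

/-- Finite sets that are additive subgroups; closure under negation is automatic in
characteristic two. -/
def IsSub (G : Finset F) : Prop := 0 ∈ G ∧ ∀ x ∈ G, ∀ y ∈ G, x + y ∈ G

lemma disjoint_coset [CharP F 2] {G : Finset F} (hG : ∀ x ∈ G, ∀ y ∈ G, x + y ∈ G) {t : F}
    (ht : t ∉ G) : Disjoint G (G.image (· + t)) := by
  rw [Finset.disjoint_left]
  intro x hx hx'
  obtain ⟨y, hy, rfl⟩ := Finset.mem_image.1 hx'
  apply ht
  have := hG _ hx _ hy
  have e : y + t + y = t := by
    linear_combination y * (CharTwo.two_eq_zero : (2 : F) = 0)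
  rwa [e] at this

lemma isSub_double [CharP F 2] {G : Finset F} (hG : IsSub G) (t : F) :
    IsSub (G ∪ G.image (· + t)) := by
  have h2 : (2 : F) = 0 := CharTwo.two_eq_zero
  refine ⟨Finset.mem_union_left _ hG.1, ?_⟩
  intro x hx y hy
  rw [Finset.mem_union, Finset.mem_image] at hx hy ⊢
  rcases hx with hx | ⟨x, hx, rfl⟩ <;> rcases hy with hy | ⟨y, hy, rfl⟩
  · exact Or.inl (hG.2 _ hx _ hy)
  · exact Or.inr ⟨x + y, hG.2 _ hx _ hy, by ring⟩
  · exact Or.inr ⟨x + y, hG.2 _ hx _ hy, by ring⟩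
  · left
    have e : x + t + (y + t) = x + y := by linear_combination t * h2
    rw [e]
    exact hG.2 _ hx _ hy

/-- The subgroup generated by `1, x, y`, for independent generators. -/
lemma exists_sub8 [CharP F 2] (x y : F) (hx0 : x ≠ 0) (hx1 : x ≠ 1) (hy0 : y ≠ 0) (hy1 : y ≠ 1)
    (hyx : y ≠ x) (hyx1 : y ≠ x + 1) :
    ∃ U : Finset F, IsSub U ∧ #U = 8 ∧ (∑ z ∈ U, z) = 0 ∧ esymmTwo U = 0 ∧
      1 ∈ U ∧ x ∈ U ∧ y ∈ U := by
  have h2 : (2 : F) = 0 := CharTwo.two_eq_zero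
  have s0 : IsSub ({0} : Finset F) := by constructor <;> simp
  have s1 := isSub_double s0 1
  set A : Finset F := {0} ∪ ({0} : Finset F).image (· + 1) with hA
  have hAe : A = {0, 1} := by rw [hA]; ext; simp
  have cA : #A = 2 := by rw [hAe]; simp
  have d2 : Disjoint A (A.image (· + x)) := disjoint_coset s1.2 (by rw [hAe]; simp [hx0, hx1])
  have s2 := isSub_double s1 x
  set B : Finset F := A ∪ A.image (· + x) with hB
  have cB : #B = 4 := by rw [hB, Finset.card_union_of_disjoint d2, card_shift, cA]
  have hBm : ∀ z, z ∈ B ↔ z = 0 ∨ z = 1 ∨ z = x ∨ z = x + 1 := by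
    intro z; rw [hB, hAe]; simp [add_comm, eq_comm]; tauto
  have eB : ∑ z ∈ B, z = 0 := by
    rw [hB, Finset.sum_union d2, sum_shift, cA]
    push_cast
    linear_combination ((∑ z ∈ A, z) + x) * h2
  have d3 : Disjoint B (B.image (· + y)) := by
    apply disjoint_coset s2.2
    rw [hBm]
    tauto
  refine ⟨B ∪ B.image (· + y), isSub_double s2 y, ?_, ?_, ?_, ?_, ?_, ?_⟩
  · rw [Finset.card_union_of_disjoint d3, card_shift, cB]
  · rw [Finset.sum_union d3, sum_shift, cB, eB]
    push_cast
    linear_combination 2 * y * h2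
  · rw [esymmTwo_union d3, esymmTwo_shift, cB, eB, show Nat.choose 4 2 = 6 from rfl]
    push_cast
    linear_combination (esymmTwo B + 3 * y ^ 2) * h2
  · exact Finset.mem_union_left _ ((hBm _).2 (by tauto))
  · exact Finset.mem_union_left _ ((hBm _).2 (by tauto))
  · exact Finset.mem_union_right _ (Finset.mem_image.2 ⟨0, s2.1, by simp⟩)

/-- Unions of `i` cosets of a subgroup `U` of order `8`, avoiding the cosets of `0` and `a`. -/
lemma exists_cosets [CharP F 2] (U : Finset F) (hU : IsSub U) (cU : #U = 8)
    (e1U : (∑ z ∈ U, z) = 0) (e2U : esymmTwo U = 0) (a : F) (i : ℕ)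
    (hi : 8 * i + 16 ≤ Fintype.card F) :
    ∃ D : Finset F, (∀ x ∈ D, ∀ y ∈ U, x + y ∈ D) ∧ #D = 8 * i ∧ (∑ z ∈ D, z) = 0 ∧
      esymmTwo D = 0 ∧ Disjoint (U ∪ U.image (· + a)) D := by
  have h2 : (2 : F) = 0 := CharTwo.two_eq_zero
  induction i with
  | zero => exact ⟨∅, by simp, by simp, by simp, esymmTwo_empty, by simp⟩
  | succ i ih =>
    obtain ⟨D, hD, cD, e1D, e2D, dD⟩ := ih (by omega)
    set W := U ∪ U.image (· + a) with hW
    have cW : #W ≤ 16 := by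
      have := Finset.card_union_le U (U.image (· + a))
      rw [card_shift, cU] at this
      exact this
    have hWU : ∀ x ∈ W, ∀ y ∈ U, x + y ∈ W := by
      intro x hx y hy
      rw [hW, Finset.mem_union, Finset.mem_image] at hx ⊢
      rcases hx with hx | ⟨x, hx, rfl⟩
      · exact Or.inl (hU.2 _ hx _ hy)
      · exact Or.inr ⟨x + y, hU.2 _ hx _ hy, by ring⟩
    have hz : ∃ z, z ∉ W ∪ D := by
      by_contra! h
      have h1 := Finset.card_le_card (fun x _ => h x : (Finset.univ : Finset F) ⊆ W ∪ D)
      rw [Finset.card_univ] at h1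
      have := Finset.card_union_le W D
      omega
    obtain ⟨z, hz⟩ := hz
    have hWD : ∀ x ∈ W ∪ D, ∀ y ∈ U, x + y ∈ W ∪ D := by
      intro x hx y hy
      rw [Finset.mem_union] at hx ⊢
      exact hx.imp (fun h => hWU x h y hy) (fun h => hD x h y hy)
    have dz : Disjoint (W ∪ D) (U.image (· + z)) := by
      rw [Finset.disjoint_left]
      intro x hx hx'
      obtain ⟨y, hy, rfl⟩ := Finset.mem_image.1 hx'
      apply hz
      have := hWD _ hx _ hy
      have e : y + z + y = z := by linear_combination y * h2
      rwa [e] at this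
    rw [Finset.disjoint_union_left] at dz
    refine ⟨D ∪ U.image (· + z), ?_, ?_, ?_, ?_, ?_⟩
    · intro x hx y hy
      rw [Finset.mem_union, Finset.mem_image] at hx ⊢
      rcases hx with hx | ⟨x, hx, rfl⟩
      · exact Or.inl (hD _ hx _ hy)
      · exact Or.inr ⟨x + y, hU.2 _ hx _ hy, by ring⟩
    · rw [Finset.card_union_of_disjoint dz.2, card_shift, cU, cD]; ring
    · rw [Finset.sum_union dz.2, sum_shift, cU, e1U, e1D]
      push_cast
      linear_combination 4 * z * h2
    · rw [esymmTwo_union dz.2, esymmTwo_shift, cU, e1U, e2U, e1D, e2D,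
        show Nat.choose 8 2 = 28 from rfl]
      push_cast
      linear_combination 14 * z ^ 2 * h2
    · rw [Finset.disjoint_union_right]
      exact ⟨dD, dz.1⟩

/-- Sets of size `r ≡ 1 (mod 4)` with `e₂ = 0`.  The five-element set used when `r ≡ 5 (mod 8)` is
`{0, 1, x, y, a}`, where `a` is determined by `e₂ = 0` and generic `x, y` keep the elements
distinct. -/
lemma exists_compl [CharP F 2] (r : ℕ) (hq : 16 ∣ Fintype.card F) (hr : r % 4 = 1)
    (hr2 : 2 * r < Fintype.card F) :
    ∃ R : Finset F, #R = r ∧ esymmTwo R = 0 := by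
  have h2 : (2 : F) = 0 := CharTwo.two_eq_zero
  obtain ⟨x, hx0, hx1⟩ := exists_ne_zero_one_s7 (F := F) (by omega)
  obtain ⟨w, hw⟩ := exists_sq_eq x
  have hy : ∃ y, y ∉ ({0, 1, x, x + 1, x / (x + 1), x ^ 2, w, x⁻¹} : Finset F) := by
    by_contra! h
    have h1 := Finset.card_le_card (fun z _ => h z : (Finset.univ : Finset F) ⊆ _)
    rw [Finset.card_univ] at h1
    have h3 := Finset.card_le_six (a := x) (b := x + 1) (c := x / (x + 1)) (d := x ^ 2)
      (e := w) (f := x⁻¹)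
    have h4 := Finset.card_insert_le (1 : F) {x, x + 1, x / (x + 1), x ^ 2, w, x⁻¹}
    have h5 := Finset.card_insert_le (0 : F) {1, x, x + 1, x / (x + 1), x ^ 2, w, x⁻¹}
    omega
  obtain ⟨y, hy⟩ := hy
  simp only [Finset.mem_insert, Finset.mem_singleton, not_or] at hy
  obtain ⟨hy0, hy1, hyx, hyx1, hyd, hyq, hyw, hyi⟩ := hy
  have hx1' : x + 1 ≠ 0 := fun h => hx1 (by linear_combination h - h2)
  have hs : x + y + 1 ≠ 0 := fun h => hyx1 (by linear_combination h - (x + 1) * h2)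
  obtain ⟨U, hU, cU, e1U, e2U, h1U, hxU, hyU⟩ := exists_sub8 x y hx0 hx1 hy0 hy1 hyx hyx1
  set a := (x * y + x + y) / (x + y + 1) with ha
  have hae : a * (x + y + 1) = x * y + x + y := div_mul_cancel₀ _ hs
  have ha0 : a ≠ 0 := by
    intro h
    rw [h] at hae
    apply hyd
    rw [eq_div_iff hx1']
    linear_combination -hae - x * h2
  have ha1 : a ≠ 1 := by
    intro h
    rw [h] at hae
    apply hyi
    apply eq_inv_of_mul_eq_one_left
    linear_combination -hae
  have hax : a ≠ x := by
    intro h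
    rw [h] at hae
    apply hyq
    linear_combination -hae
  have hay : a ≠ y := by
    intro h
    rw [h] at hae
    apply hyw
    apply CharTwo.sq_injective
    linear_combination hae - hw
  set T : Finset F := {a, 0, 1, x, y} with hT
  have n1 : x ∉ ({y} : Finset F) := by simpa using Ne.symm hyx
  have n2 : (1 : F) ∉ ({x, y} : Finset F) := by
    simp only [Finset.mem_insert, Finset.mem_singleton]; grind
  have n3 : (0 : F) ∉ ({1, x, y} : Finset F) := by
    simp only [Finset.mem_insert, Finset.mem_singleton]; grind
  have n4 : a ∉ ({0, 1, x, y} : Finset F) := by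
    simp only [Finset.mem_insert, Finset.mem_singleton]; grind
  have cT : #T = 5 := by
    rw [hT, Finset.card_insert_of_notMem n4, Finset.card_insert_of_notMem n3,
      Finset.card_insert_of_notMem n2, Finset.card_insert_of_notMem n1, Finset.card_singleton]
  have eT : esymmTwo T = 0 := by
    have e0 : esymmTwo ({y} : Finset F) = 0 := by
      rw [← Finset.insert_empty, esymmTwo_insert (Finset.notMem_empty y), esymmTwo_empty]; simp
    rw [hT, esymmTwo_insert n4, esymmTwo_insert n3, esymmTwo_insert n2, esymmTwo_insert n1, e0,
      Finset.sum_insert n3, Finset.sum_insert n2, Finset.sum_insert n1, Finset.sum_singleton]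
    linear_combination hae + (x * y + x + y) * h2
  have hTW : T ⊆ U ∪ U.image (· + a) := by
    intro z hz
    rw [hT] at hz
    simp only [Finset.mem_insert, Finset.mem_singleton] at hz
    rw [Finset.mem_union, Finset.mem_image]
    rcases hz with rfl | rfl | rfl | rfl | rfl
    · exact Or.inr ⟨0, hU.1, by simp⟩
    · exact Or.inl hU.1
    · exact Or.inl h1U
    · exact Or.inl hxU
    · exact Or.inl hyU
  obtain ⟨D, -, cD, e1D, e2D, dD⟩ := exists_cosets U hU cU e1U e2U a (r / 8) (by omega)
  rcases (by omega : r % 8 = 1 ∨ r % 8 = 5) with h | h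
  · have hn : (0 : F) ∉ D := Finset.disjoint_left.1 dD (Finset.mem_union_left _ hU.1)
    exact ⟨insert 0 D, by rw [Finset.card_insert_of_notMem hn, cD]; omega,
      by rw [esymmTwo_insert hn, e2D]; simp⟩
  · have d := dD.mono_left hTW
    exact ⟨T ∪ D, by rw [Finset.card_union_of_disjoint d, cT, cD]; omega,
      by rw [esymmTwo_union d, eT, e1D, e2D]; simp⟩

/-! ### Solving the equation for each residue of the size -/

lemma solve_zero [CharP F 2] (m : ℕ) (hm : m % 4 = 0) (hm1 : 1 ≤ m) (hm2 : m < Fintype.card F)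
    (b c : F) :
    ∃ S : Finset F, #S = m ∧ esymmTwo S + (∑ x ∈ S, x) ^ 2 + b * ∑ x ∈ S, x = c := by
  have h2 : (2 : F) = 0 := CharTwo.two_eq_zero
  obtain ⟨i, rfl⟩ : ∃ i, m = 4 * i + 4 := ⟨m / 4 - 1, by omega⟩
  obtain ⟨S, cS, hS⟩ := exists_sum_ne (F := F) _ hm1 hm2
  have hch : (4 * i + 4).choose 2 = 2 * ((i + 1) * (4 * i + 3)) := by
    rw [Nat.choose_two_right, show 4 * i + 4 - 1 = 4 * i + 3 by omega,
      show (4 * i + 4) * (4 * i + 3) = 2 * (2 * ((i + 1) * (4 * i + 3))) by ring]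
    omega
  set s := ∑ x ∈ S, x with hs
  obtain ⟨t, ht⟩ : ∃ t : F, t * s = c - (esymmTwo S + s ^ 2 + b * s) :=
    ⟨_, div_mul_cancel₀ _ hS⟩
  refine ⟨S.image (· + t), by rw [card_shift, cS], ?_⟩
  rw [esymmTwo_shift, sum_shift, cS, hch, ← hs]
  push_cast
  linear_combination ht + ((2 * i + 1) * t * s + (i + 1) * (4 * i + 3) * t ^ 2
    + s * (4 * i + 4) * t + 2 * (i + 1) * (4 * i + 4) * t ^ 2 + b * 2 * (i + 1) * t) * h2

lemma solve_one [CharP F 2] (m : ℕ) (hm : m % 4 = 1) (hm1 : 2 ≤ m) (hm2 : m < Fintype.card F)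
    (b c : F) :
    ∃ S : Finset F, #S = m ∧ esymmTwo S + (∑ x ∈ S, x) ^ 2 + b * ∑ x ∈ S, x = c := by
  have h2 : (2 : F) = 0 := CharTwo.two_eq_zero
  obtain ⟨i, rfl⟩ : ∃ i, m = 4 * i + 1 := ⟨m / 4, by omega⟩
  obtain ⟨S, cS, hS⟩ := exists_esymmTwo_ne (F := F) _ hm1 hm2
  have hch : (4 * i + 1).choose 2 = 2 * (i * (4 * i + 1)) := by
    rw [Nat.choose_two_right, show 4 * i + 1 - 1 = 4 * i by omega,
      show (4 * i + 1) * (4 * i) = 2 * (2 * (i * (4 * i + 1))) by ring]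
    omega
  -- A quadratic has at most two roots, and the field has more than two elements.
  obtain ⟨s, hs⟩ : ∃ s : F, c - s ^ 2 - b * s ≠ 0 := by
    obtain ⟨l, hl0, hl1⟩ := exists_ne_zero_one_s7 (F := F) (by omega)
    by_contra! h
    have k0 := h 0
    have k1 := h 1
    have k2 := h l
    have : l * (l - 1) = 0 := by linear_combination -k2 + l * k1 + (1 - l) * k0
    rcases mul_eq_zero.1 this with h | h
    · exact hl0 h
    · exact hl1 (sub_eq_zero.1 h)
  obtain ⟨l, hl⟩ := exists_sq_eq ((c - s ^ 2 - b * s) / esymmTwo S)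
  have hl' : l ^ 2 * esymmTwo S = c - s ^ 2 - b * s := by rw [hl, div_mul_cancel₀ _ hS]
  have hl0 : l ≠ 0 := by
    rintro rfl
    exact hs (by rw [← hl']; ring)
  set A := S.image (l * ·) with hA
  have cA : #A = 4 * i + 1 := by rw [hA, card_scale S hl0, cS]
  have eA : esymmTwo A = c - s ^ 2 - b * s := by rw [hA, esymmTwo_scale S hl0, hl']
  set t := s - ∑ x ∈ A, x with ht
  have hsum : ∑ x ∈ A.image (· + t), x = s := by
    rw [sum_shift, cA]
    push_cast
    linear_combination ht + 2 * i * t * h2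
  refine ⟨A.image (· + t), by rw [card_shift, cA], ?_⟩
  rw [esymmTwo_shift, hsum, cA, hch, eA]
  push_cast
  linear_combination (2 * i * t * (∑ x ∈ A, x) + i * (4 * i + 1) * t ^ 2) * h2

/-- For sizes `3` modulo `4` the sum of the elements can be prescribed without changing
`e₂ + e₁²`. -/
lemma shift_three [CharP F 2] (S : Finset F) (hm : #S % 4 = 3) (s : F) :
    ∃ A : Finset F, #A = #S ∧ ∑ x ∈ A, x = s ∧
      esymmTwo A + s ^ 2 = esymmTwo S + (∑ x ∈ S, x) ^ 2 := by
  have h2 : (2 : F) = 0 := CharTwo.two_eq_zero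
  obtain ⟨i, hi⟩ : ∃ i, #S = 4 * i + 3 := ⟨#S / 4, by omega⟩
  have hch : (4 * i + 3).choose 2 = (4 * i + 3) * (2 * i + 1) := by
    rw [Nat.choose_two_right, show 4 * i + 3 - 1 = 4 * i + 2 by omega,
      show (4 * i + 3) * (4 * i + 2) = 2 * ((4 * i + 3) * (2 * i + 1)) by ring]
    omega
  obtain ⟨t, ht⟩ : ∃ t : F, s = (∑ x ∈ S, x) + t := ⟨s - ∑ x ∈ S, x, by ring⟩
  refine ⟨S.image (· + t), card_shift _ _, ?_, ?_⟩
  · rw [sum_shift, hi, ht]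
    push_cast
    linear_combination (2 * i + 1) * t * h2
  · rw [esymmTwo_shift, hi, hch, ht]
    push_cast
    linear_combination ((2 * i + 2) * t * (∑ x ∈ S, x) + (4 * i ^ 2 + 5 * i + 2) * t ^ 2) * h2

lemma solve_three_b [CharP F 2] (m : ℕ) (hm : m % 4 = 3) (hm2 : m < Fintype.card F)
    (b c : F) (hb : b ≠ 0) :
    ∃ S : Finset F, #S = m ∧ esymmTwo S + (∑ x ∈ S, x) ^ 2 + b * ∑ x ∈ S, x = c := by
  obtain ⟨S, -, cS⟩ := Finset.exists_subset_card_eq (s := (Finset.univ : Finset F)) (n := m)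
    (by rw [Finset.card_univ]; omega)
  obtain ⟨A, cA, sA, eA⟩ := shift_three S (by omega)
    ((c - (esymmTwo S + (∑ x ∈ S, x) ^ 2)) / b)
  refine ⟨A, by omega, ?_⟩
  rw [sA, eA, mul_div_cancel₀ _ hb]
  ring

lemma solve_three_c [CharP F 2] (m : ℕ) (hm : m % 4 = 3) (hm2 : m + 1 < Fintype.card F)
    (c : F) (hc : c ≠ 0) :
    ∃ S : Finset F, #S = m ∧ esymmTwo S + (∑ x ∈ S, x) ^ 2 = c := by
  obtain ⟨S, cS, hS⟩ := exists_inv_ne (F := F) m (by omega) hm2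
  obtain ⟨l, hl⟩ := exists_sq_eq (c / (esymmTwo S + (∑ x ∈ S, x) ^ 2))
  have hl' : l ^ 2 * (esymmTwo S + (∑ x ∈ S, x) ^ 2) = c := by rw [hl, div_mul_cancel₀ _ hS]
  have hl0 : l ≠ 0 := by
    rintro rfl
    exact hc (by rw [← hl']; ring)
  refine ⟨S.image (l * ·), by rw [card_scale S hl0, cS], ?_⟩
  rw [esymmTwo_scale S hl0, sum_scale S hl0, ← hl']
  ring

end Helpers

/-- for `q` a power of 2 (i.e. characteristic 2), the standard
Reed-Solomon code `C_q` with `k + 2 ≤ q - 2`, and a received word `u` with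
interpolation polynomial `x^{k+2} - b x^{k+1} + c x^k + v(x)`,
`deg v ≤ k - 1`: `d(u, C_q) ≤ q - k - 1` if one of the following holds:
(1) `4 ∣ k+1`, `c = 0`, `k+2 ≥ q/2`; (2) `4 ∣ k`; (3) `2 ∣ k`, `4 ∤ k`,
`b ≠ 0`; (4) `2 ∣ k`, `4 ∤ k`, `c ≠ 0`; (5) `2 ∣ k`, `4 ∤ k`, `b = c = 0`,
`k+1 > q/2`. (The inequalities `k+2 ≥ q/2` and `k+1 > q/2` are expressed as
`2*(k+2) ≥ q` and `2*(k+1) > q`.) -/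
theorem stmt_7 {F : Type*} [Field F] [Fintype F] [DecidableEq F] [CharP F 2]
    (k : ℕ) (hk : 1 ≤ k) (hk2 : k + 2 ≤ Fintype.card F - 2)
    (b c : F) (v : F[X]) (hv : v.degree < (k : WithBot ℕ))
    (u : F → F)
    (hu : ∀ x : F, u x = (X ^ (k + 2) - C b * X ^ (k + 1) + C c * X ^ k + v).eval x)
    (hcond :
      (4 ∣ k + 1 ∧ c = 0 ∧ 2 * (k + 2) ≥ Fintype.card F) ∨
      (4 ∣ k) ∨
      (2 ∣ k ∧ ¬ (4 ∣ k) ∧ b ≠ 0) ∨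
      (2 ∣ k ∧ ¬ (4 ∣ k) ∧ c ≠ 0) ∨
      (2 ∣ k ∧ ¬ (4 ∣ k) ∧ b = 0 ∧ c = 0 ∧ 2 * (k + 1) > Fintype.card F)) :
    errDist u (RSCodeStd F k) ≤ Fintype.card F - k - 1 := by
  suffices h : ∃ S : Finset F, #S = k + 1 ∧
      esymmTwo S + (∑ x ∈ S, x) ^ 2 + b * ∑ x ∈ S, x = c by
    obtain ⟨S, cS, hS⟩ := h
    exact errDist_le_of_set k b c v hv u hu S cS hS
  rcases hcond with ⟨h, -, -⟩ | h | ⟨h, h', hb⟩ | ⟨h, h', hc⟩ | ⟨h, h', rfl, rfl, hlt⟩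
  · exact solve_zero (k + 1) (by omega) (by omega) (by omega) b c
  · exact solve_one (k + 1) (by omega) (by omega) (by omega) b c
  · exact solve_three_b (k + 1) (by omega) (by omega) b c hb
  · by_cases hb : b = 0
    · obtain ⟨S, cS, hS⟩ := solve_three_c (k + 1) (by omega) (by omega) c hc
      exact ⟨S, cS, by rw [hS, hb]; ring⟩
    · exact solve_three_b (k + 1) (by omega) (by omega) b c hb
  · obtain ⟨n, -, hn⟩ := FiniteField.card F 2
    have h4 : 4 ∣ Fintype.card F := by
      rw [hn]
      by_cases h : 2 ≤ (n : ℕ)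
      · exact pow_dvd_pow 2 h
      · have h1 := Nat.pow_le_pow_right (n := 2) (by omega) (by omega : (n : ℕ) ≤ 1)
        omega
    -- The complement has size `1` modulo `4`, at least `3` and below `q / 2`, so `q > 8`.
    have h16 : 16 ∣ Fintype.card F := by
      rw [hn]
      by_cases h : 4 ≤ (n : ℕ)
      · exact pow_dvd_pow 2 h
      · have h1 := Nat.pow_le_pow_right (n := 2) (by omega) (by omega : (n : ℕ) ≤ 3)
        omega
    obtain ⟨R, cR, eR⟩ := exists_compl (F := F) (Fintype.card F - (k + 1)) h16 (by omega) (by omega)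
    refine ⟨Rᶜ, by rw [Finset.card_compl, cR]; omega, ?_⟩
    rw [esymmTwo_compl (by omega), eR]
    ring
end

section
/- Let q be a power of an odd prime p, let C_q be the standard Reed-Solomon code of dimension k ≥ 1 over F_q with k+2 ≤ q−2 and p ∣ k+2, and let u ∈ F_q^q be a received word whose interpolation polynomial is u(x) = x^{k+2} − b x^{k+1} + c x^k + v(x) with deg v(x) ≤ k−1. If b = 0, c = 0, and k+2 > q/2 + 1, then d(u,C_q) ≤ q−k−1. -/
/-!
A word agreeing with some codeword on `k + 1` points is at distance at most `q - k - 1`. Up to a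
codeword, `u` is `x ^ (k + 2)`, so it suffices to find a monic polynomial of degree `k + 2` with at
least `k + 1` distinct roots in `F` whose coefficients in degrees `k + 1` and `k` vanish. Taking its
roots to be a set `S` of `k + 1` elements together with `-∑ x ∈ S, x`, Newton's identities
(`two_X_sq_mul_prod`) turn this into `∑ x ∈ S, x ^ 2 + (∑ x ∈ S, x) ^ 2 = 0`. As the sums of `x` and
of `x ^ 2` over `F` vanish, the complement `T` of `S` must satisfy
`(∑ x ∈ T, x) ^ 2 = ∑ x ∈ T, x ^ 2`, and its size is `q - k - 1 = 1 + p * l`.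

Such a set is built in `exists_good` as a small set `B` plus cosets of the prime field avoiding `B`
(`exists_extend`). Over a coset the sum of `x` is `0`, and the sum of `x ^ 2` is a constant, which
is `0` for `p > 3`. So `B = {0}` with `l` cosets works if `p > 3` or `p ∣ l`. For `p = 3` and the other
residues of `l` modulo `3`, the number of cosets is a multiple of `3` and `B` is one of
* `{0, 1 / y, 1 / (y + 1), 1 / (y - 1)}` with `y ∉ 𝔽₃`,
* `{0, ±a, ±b, ±c}` with `a = t ^ 2 + 1`, `b = t ^ 2 + t - 1`, `c = t ^ 2 - t - 1` and
  `t ^ 9 ≠ t`, where `a ^ 2 + b ^ 2 + c ^ 2 = 0` in characteristic `3`.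
-/

open Polynomial Finset

/-! ### Polynomials with vanishing power sums of the roots -/

/-- Newton's identities for the three leading coefficients of a product of linear factors. The
factor `X ^ 2` avoids truncated exponents when there are fewer than two factors. -/
lemma two_X_sq_mul_prod {F : Type*} [Field F] (Z : Multiset F) :
    ∃ R : F[X], R.degree < ((Multiset.card Z : ℕ) : WithBot ℕ) ∧
      2 * X ^ 2 * (Z.map fun a => X - C a).prod =
        X ^ (Multiset.card Z) * (2 * X ^ 2 - 2 * C Z.sum * X +
          C (Z.sum ^ 2 - (Z.map (· ^ 2)).sum)) + R := by
  induction Z using Multiset.induction with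
  | empty => exact ⟨0, by simp, by simp⟩
  | cons a Z ih =>
    obtain ⟨R, hR, h⟩ := ih
    set n := Multiset.card Z
    set s := Z.sum
    set w := (Z.map (· ^ 2)).sum
    refine ⟨(X - C a) * R - C (a * (s ^ 2 - w)) * X ^ n, ?_, ?_⟩
    · rw [Multiset.card_cons]
      refine lt_of_le_of_lt (degree_sub_le _ _) (max_lt ?_ ?_)
      · rw [degree_mul, degree_X_sub_C, add_comm, Nat.cast_add, Nat.cast_one]
        exact WithBot.add_lt_add_right (by simp) hR
      · refine lt_of_le_of_lt (degree_C_mul_X_pow_le n _) ?_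
        exact_mod_cast Nat.lt_succ_self n
    · simp only [Multiset.map_cons, Multiset.prod_cons, Multiset.sum_cons, Multiset.card_cons]
      calc 2 * X ^ 2 * ((X - C a) * (Z.map fun a => X - C a).prod)
          = (X - C a) * (2 * X ^ 2 * (Z.map fun a => X - C a).prod) := by ring
        _ = _ := by
          rw [h]
          simp only [C_sub, C_add, C_mul, C_pow]
          ring

lemma degree_prod_sub_X_pow {F : Type*} [Field F] (h2 : (2 : F) ≠ 0) (Z : Multiset F) (k : ℕ)
    (hZ : Multiset.card Z = k + 2) (h0 : Z.sum = 0) (h1 : (Z.map (· ^ 2)).sum = 0) :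
    ((Z.map fun a => X - C a).prod - X ^ (k + 2)).degree < (k : WithBot ℕ) := by
  obtain ⟨R, hR, h⟩ := two_X_sq_mul_prod Z
  rw [h0, h1, hZ] at h
  rw [hZ] at hR
  set G := (Z.map fun a => X - C a).prod - X ^ (k + 2) with hG
  have e : R = C 2 * (G * X ^ 2) := by
    have : (C 2 : F[X]) = 2 := rfl
    rw [this, hG]
    simp at h
    linear_combination -h
  rw [e, degree_C_mul h2, degree_mul, degree_X_pow] at hR
  by_contra hc
  push Not at hc
  have := add_le_add_left hc (2 : WithBot ℕ)
  exact absurd hR (not_lt.2 (by simpa using this))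

/-! ### Adjoining cosets of the prime field -/

/-- The cosets of the prime field in `F`. -/
abbrev PrimeCosets (F : Type*) [Field F] (p : ℕ) [Fact p.Prime] [CharP F p] : Type _ :=
  F ⧸ (ZMod.castHom (dvd_refl p) F).toAddMonoidHom.range

open scoped Classical in
/-- A coset of the prime field is parametrized by `ZMod p` via `j ↦ a + j`. -/
lemma sum_coset {F M : Type*} [Field F] [Fintype F] [AddCommMonoid M]
    (p : ℕ) [Fact p.Prime] [CharP F p] (f : F → M) (w : PrimeCosets F p) :
    ∃ a : F, ∑ x with (QuotientAddGroup.mk x : PrimeCosets F p) = w, f x =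
      ∑ j : ZMod p, f (a + ZMod.castHom (dvd_refl p) F j) := by
  obtain ⟨a, rfl⟩ := QuotientAddGroup.mk_surjective w
  refine ⟨a, (Finset.sum_bij (fun j _ => a + ZMod.castHom (dvd_refl p) F j) ?_ ?_ ?_ ?_).symm⟩
  · intro j _
    simp only [Finset.mem_filter, Finset.mem_univ, true_and]
    rw [eq_comm, QuotientAddGroup.eq]
    exact ⟨j, by simp⟩
  · intro i _ j _ h
    exact (ZMod.castHom (dvd_refl p) F).injective (add_left_cancel h)
  · intro x hx
    simp only [Finset.mem_filter, Finset.mem_univ, true_and] at hx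
    rw [eq_comm, QuotientAddGroup.eq] at hx
    obtain ⟨j, hj⟩ := hx
    refine ⟨j, Finset.mem_univ _, ?_⟩
    have hj' : ZMod.castHom (dvd_refl p) F j = -a + x := hj
    rw [hj']; ring
  · intros; rfl

lemma sum_filter_mem_eq {F M W : Type*} [Fintype F] [AddCommMonoid M] [DecidableEq W]
    (π : F → W) (N : Finset W) (f : F → M) :
    ∑ x with π x ∈ N, f x = ∑ w ∈ N, ∑ x with π x = w, f x := by
  rw [← Finset.sum_fiberwise_of_maps_to (g := π) (t := N) (by simp)]
  refine Finset.sum_congr rfl fun w hw => Finset.sum_congr ?_ fun _ _ => rfl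
  ext x
  simp only [Finset.mem_filter, Finset.mem_univ, true_and]
  exact ⟨fun h => h.2, fun h => ⟨h ▸ hw, h⟩⟩

/-- Adjoining `n` cosets of the prime field to `B` changes neither the sum nor the sum of squares,
provided that `p > 3` or `p ∣ n`. There are `q / p` cosets and `B` meets at most `#B` of them. -/
lemma exists_extend {F : Type*} [Field F] [Fintype F] (p : ℕ) [Fact p.Prime] [CharP F p]
    (hp : p ≠ 2) (n : ℕ) (hn : 3 < p ∨ p ∣ n) (B : Finset F)
    (hB : n = 0 ∨ p * (n + #B) ≤ Fintype.card F) :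
    ∃ T : Finset F, #T = #B + p * n ∧ ∑ x ∈ T, x = ∑ x ∈ B, x ∧
      ∑ x ∈ T, x ^ 2 = ∑ x ∈ B, x ^ 2 := by
  classical
  rcases hB with rfl | hB
  · exact ⟨B, by simp⟩
  have hp2 : 2 < p := lt_of_le_of_ne (Fact.out : p.Prime).two_le (Ne.symm hp)
  let π : F → PrimeCosets F p := fun x => QuotientAddGroup.mk x
  have cardU (N : Finset (PrimeCosets F p)) : #{x | π x ∈ N} = p * #N := by
    rw [Finset.card_eq_sum_ones, sum_filter_mem_eq, Finset.sum_congr rfl (g := fun _ => p), Finset.sum_const,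
      smul_eq_mul, mul_comm]
    intro w _
    obtain ⟨a, ha⟩ := sum_coset (F := F) p (fun _ => 1) w
    exact ha.trans (by simp [ZMod.card])
  have hq : Fintype.card F = p * Fintype.card (PrimeCosets F p) := by
    have := cardU Finset.univ
    simpa using this
  have hle : n ≤ #(Finset.univ \ B.image π) := by
    have h1 : n + #B ≤ Fintype.card (PrimeCosets F p) :=
      Nat.le_of_mul_le_mul_left (hq ▸ hB) (by omega)
    have h2 : #(B.image π) ≤ #B := Finset.card_image_le
    rw [← Finset.compl_eq_univ_sdiff, Finset.card_compl]
    omega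
  obtain ⟨N, hN, hNn⟩ := Finset.exists_subset_card_eq hle
  have hj1 : ∑ j : ZMod p, ZMod.castHom (dvd_refl p) F j = 0 := by
    have := FiniteField.sum_pow_lt_card_sub_one (ZMod p) 1 (by rw [ZMod.card]; omega)
    rw [← map_sum]
    simp only [pow_one] at this
    rw [this, map_zero]
  have hsum1 : ∑ x with π x ∈ N, x = 0 := by
    rw [sum_filter_mem_eq]
    refine Finset.sum_eq_zero fun w _ => ?_
    obtain ⟨a, ha⟩ := sum_coset (F := F) p (fun x => x) w
    refine ha.trans ?_
    rw [Finset.sum_add_distrib, hj1]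
    simp [ZMod.card]
  have hsum2 : ∑ x with π x ∈ N, x ^ 2 = 0 := by
    have h : ∀ w ∈ N, ∑ x with π x = w, x ^ 2 =
        ∑ j : ZMod p, ZMod.castHom (dvd_refl p) F j ^ 2 := by
      intro w _
      obtain ⟨a, ha⟩ := sum_coset (F := F) p (fun x => x ^ 2) w
      refine ha.trans ?_
      simp only [add_sq]
      rw [Finset.sum_add_distrib, Finset.sum_add_distrib, ← Finset.mul_sum, hj1]
      simp [ZMod.card]
    rw [sum_filter_mem_eq, Finset.sum_congr rfl h, Finset.sum_const, hNn, nsmul_eq_mul]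
    rcases hn with h3 | hd
    · have := FiniteField.sum_pow_lt_card_sub_one (ZMod p) 2 (by rw [ZMod.card]; omega)
      simp only [← map_pow]
      rw [← map_sum, this, map_zero, mul_zero]
    · rw [(CharP.cast_eq_zero_iff F p n).2 hd, zero_mul]
  have hdisj : Disjoint B ({x | π x ∈ N} : Finset F) := by
    rw [Finset.disjoint_left]
    intro x hx hx'
    simp only [Finset.mem_filter, Finset.mem_univ, true_and] at hx'
    exact (Finset.mem_sdiff.1 (hN hx')).2 (Finset.mem_image_of_mem π hx)
  refine ⟨B ∪ ({x | π x ∈ N} : Finset F), ?_, ?_, ?_⟩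
  · rw [Finset.card_union_of_disjoint hdisj, cardU, hNn]
  · rw [Finset.sum_union hdisj, hsum1, add_zero]
  · rw [Finset.sum_union hdisj, hsum2, add_zero]

/-! ### Sets `T` with `(∑ x ∈ T, x) ^ 2 = ∑ x ∈ T, x ^ 2` -/

/-- In a field with more than `d` elements, some `t` satisfies `t ^ d ≠ t`. -/
lemma exists_pow_ne {F : Type*} [Field F] [Fintype F] (d : ℕ) (hd : 1 < d)
    (h : d < Fintype.card F) : ∃ t : F, t ^ d ≠ t := by
  by_contra! hc
  have h0 : (X ^ d - X : F[X]) ≠ 0 := FiniteField.X_pow_card_sub_X_ne_zero F hd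
  have := Polynomial.card_le_degree_of_subset_roots (p := (X ^ d - X : F[X])) (Z := Finset.univ)
    (fun x _ => by
      rw [mem_roots h0]
      simp [hc x])
  rw [FiniteField.X_pow_card_sub_X_natDegree_eq F hd, Finset.card_univ] at this
  omega

/-- The second elementary symmetric function of `1 / y, 1 / (y + 1), 1 / (y - 1)` has numerator
`3 * y = 0`. -/
lemma exists_four {F : Type*} [Field F] [Fintype F] [CharP F 3] (h : 3 < Fintype.card F) :
    ∃ B : Finset F, #B = 4 ∧ (∑ x ∈ B, x) ^ 2 = ∑ x ∈ B, x ^ 2 := by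
  classical
  obtain ⟨y, hy⟩ := exists_pow_ne (F := F) 3 (by norm_num) h
  have h3 : (3 : F) = 0 := CharP.cast_eq_zero F 3
  have y0 : y ≠ 0 := by rintro rfl; simp at hy
  have y1 : y + 1 ≠ 0 := fun h => hy (by linear_combination (y ^ 2 - y) * h)
  have y2 : y - 1 ≠ 0 := fun h => hy (by linear_combination (y ^ 2 + y) * h)
  have one2 : (2 : F) ≠ 0 := fun h => one_ne_zero (α := F) (by linear_combination h3 - h)
  have e1 : y⁻¹ ≠ (y + 1)⁻¹ := fun h => one_ne_zero (α := F) (by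
    have := inv_injective h; linear_combination -this)
  have e2 : y⁻¹ ≠ (y - 1)⁻¹ := fun h => one_ne_zero (α := F) (by
    have := inv_injective h; linear_combination this)
  have e3 : (y + 1)⁻¹ ≠ (y - 1)⁻¹ := fun h => one2 (by
    have := inv_injective h; linear_combination this)
  have n1 : (0 : F) ∉ ({y⁻¹, (y + 1)⁻¹, (y - 1)⁻¹} : Finset F) := by
    simp only [Finset.mem_insert, Finset.mem_singleton, not_or]
    exact ⟨(inv_ne_zero y0).symm, (inv_ne_zero y1).symm, (inv_ne_zero y2).symm⟩
  have n2 : y⁻¹ ∉ ({(y + 1)⁻¹, (y - 1)⁻¹} : Finset F) := by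
    simp only [Finset.mem_insert, Finset.mem_singleton, not_or]
    exact ⟨e1, e2⟩
  have n3 : (y + 1)⁻¹ ∉ ({(y - 1)⁻¹} : Finset F) := by simpa only [Finset.mem_singleton] using e3
  refine ⟨{0, y⁻¹, (y + 1)⁻¹, (y - 1)⁻¹}, ?_, ?_⟩
  · rw [Finset.card_insert_of_notMem n1, Finset.card_insert_of_notMem n2,
      Finset.card_insert_of_notMem n3, Finset.card_singleton]
  · rw [Finset.sum_insert n1, Finset.sum_insert n2, Finset.sum_insert n3, Finset.sum_singleton,
      Finset.sum_insert n1, Finset.sum_insert n2, Finset.sum_insert n3, Finset.sum_singleton]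
    have key : y⁻¹ * (y + 1)⁻¹ + y⁻¹ * (y - 1)⁻¹ + (y + 1)⁻¹ * (y - 1)⁻¹ = 0 := by
      field_simp
      linear_combination y * h3
    linear_combination 2 * key

lemma exists_seven {F : Type*} [Field F] [Fintype F] [CharP F 3] (h : 9 < Fintype.card F) :
    ∃ B : Finset F, #B = 7 ∧ (∑ x ∈ B, x) ^ 2 = ∑ x ∈ B, x ^ 2 := by
  classical
  obtain ⟨t, ht⟩ := exists_pow_ne (F := F) 9 (by norm_num) h
  have h3 : (3 : F) = 0 := CharP.cast_eq_zero F 3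
  have one2 : (2 : F) ≠ 0 := fun h => one_ne_zero (α := F) (by linear_combination h3 - h)
  -- `X ^ 9 - X` is the product of the monic irreducible polynomials of degree at most `2` over `𝔽₃`.
  have hprod : t * (t - 1) * (t + 1) * (t ^ 2 + 1) * (t ^ 2 + t - 1) * (t ^ 2 - t - 1) ≠ 0 := by
    intro h
    refine ht ?_
    linear_combination h + (t ^ 7 - t ^ 3) * h3
  simp only [ne_eq, mul_eq_zero, not_or] at hprod
  obtain ⟨⟨⟨⟨⟨t0, t1⟩, t2⟩, ha⟩, hb⟩, hc⟩ := hprod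
  generalize hA : t ^ 2 + 1 = a at ha
  generalize hB : t ^ 2 + t - 1 = b at hb
  generalize hC : t ^ 2 - t - 1 = c at hc
  have sq : a ^ 2 + b ^ 2 + c ^ 2 = 0 := by
    subst hA hB hC
    linear_combination (t ^ 4 + 1) * h3
  have ab : a - b ≠ 0 := fun h => t2 (by subst hA hB; linear_combination -h + h3)
  have ab' : a + b ≠ 0 := fun h => mul_ne_zero t0 t1 (by
    subst hA hB; linear_combination -h + t ^ 2 * h3)
  have ac : a - c ≠ 0 := fun h => t1 (by subst hA hC; linear_combination h - h3)
  have ac' : a + c ≠ 0 := fun h => mul_ne_zero t0 t2 (by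
    subst hA hC; linear_combination -h + t ^ 2 * h3)
  have bc : b - c ≠ 0 := fun h => mul_ne_zero one2 t0 (by
    subst hB hC; linear_combination h)
  have bc' : b + c ≠ 0 := fun h => mul_ne_zero one2 (mul_ne_zero t1 t2) (by
    subst hB hC; linear_combination h)
  have neg_ne {x : F} (hx : x ≠ 0) : x ≠ -x := fun h =>
    mul_ne_zero one2 hx (by linear_combination h)
  have n1 : (0 : F) ∉ ({a, -a, b, -b, c, -c} : Finset F) := by
    simp only [Finset.mem_insert, Finset.mem_singleton, not_or]
    refine ⟨?_, ?_, ?_, ?_, ?_, ?_⟩ <;> grind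
  have n2 : a ∉ ({-a, b, -b, c, -c} : Finset F) := by
    simp only [Finset.mem_insert, Finset.mem_singleton, not_or]
    refine ⟨neg_ne ha, ?_, ?_, ?_, ?_⟩ <;> grind
  have n3 : -a ∉ ({b, -b, c, -c} : Finset F) := by
    simp only [Finset.mem_insert, Finset.mem_singleton, not_or]
    refine ⟨?_, ?_, ?_, ?_⟩ <;> grind
  have n4 : b ∉ ({-b, c, -c} : Finset F) := by
    simp only [Finset.mem_insert, Finset.mem_singleton, not_or]
    refine ⟨neg_ne hb, ?_, ?_⟩ <;> grind
  have n5 : -b ∉ ({c, -c} : Finset F) := by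
    simp only [Finset.mem_insert, Finset.mem_singleton, not_or]
    refine ⟨?_, ?_⟩ <;> grind
  have n6 : c ∉ ({-c} : Finset F) := by simpa only [Finset.mem_singleton] using neg_ne hc
  refine ⟨{0, a, -a, b, -b, c, -c}, ?_, ?_⟩
  · rw [Finset.card_insert_of_notMem n1, Finset.card_insert_of_notMem n2,
      Finset.card_insert_of_notMem n3, Finset.card_insert_of_notMem n4,
      Finset.card_insert_of_notMem n5, Finset.card_insert_of_notMem n6, Finset.card_singleton]
  · simp only [Finset.sum_insert n1, Finset.sum_insert n2, Finset.sum_insert n3,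
      Finset.sum_insert n4, Finset.sum_insert n5, Finset.sum_insert n6, Finset.sum_singleton]
    linear_combination -2 * sq

/-- The bound on `l` leaves room for `B` and the cosets adjoined to it. -/
lemma exists_good {F : Type*} [Field F] [Fintype F] (p : ℕ) [Fact p.Prime] [CharP F p]
    (hp : p ≠ 2) (l : ℕ) (hl : 2 * (1 + p * l) < Fintype.card F) :
    ∃ T : Finset F, #T = 1 + p * l ∧ (∑ x ∈ T, x) ^ 2 = ∑ x ∈ T, x ^ 2 := by
  have hp2 : 2 < p := lt_of_le_of_ne (Fact.out : p.Prime).two_le (Ne.symm hp)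
  have hdq : p ∣ Fintype.card F := by
    obtain ⟨n, _, hn⟩ := FiniteField.card F p
    rw [hn]
    exact dvd_pow_self p n.ne_zero
  by_cases hcase : 3 < p ∨ p ∣ l
  · obtain ⟨T, h1, h2, h3⟩ := exists_extend p hp l hcase ({0} : Finset F) (by
      rcases Nat.eq_zero_or_pos l with h | h
      · exact Or.inl h
      · right
        have := Nat.mul_le_mul_left p h
        rw [Finset.card_singleton, mul_add]
        omega)
    exact ⟨T, by simpa using h1, by rw [h2, h3]; simp⟩
  · obtain rfl : p = 3 := by omega
    have hl3 : l % 3 = 1 ∨ l % 3 = 2 := by omega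
    rcases hl3 with h | h
    · obtain ⟨B, hB, hB2⟩ := exists_four (F := F) (by omega)
      obtain ⟨T, h1, h2, h3⟩ := exists_extend 3 hp (l - 1) (Or.inr (by omega)) B (by omega)
      exact ⟨T, by omega, by rw [h2, h3, hB2]⟩
    · obtain ⟨B, hB, hB2⟩ := exists_seven (F := F) (by omega)
      obtain ⟨T, h1, h2, h3⟩ := exists_extend 3 hp (l - 2) (Or.inr (by omega)) B (by omega)
      exact ⟨T, by omega, by rw [h2, h3, hB2]⟩

/-- for `q` a power of an odd prime `p`, the standard
Reed-Solomon code `C_q` with `k + 2 ≤ q - 2` and `p ∣ k + 2`, and a received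
word `u` with interpolation polynomial `x^{k+2} - b x^{k+1} + c x^k + v(x)`,
`deg v ≤ k - 1`: if `b = 0`, `c = 0`, and `k + 2 > q/2 + 1` (expressed as
`2*(k+2) > q + 2`), then `d(u, C_q) ≤ q - k - 1`. -/
theorem stmt_9 {F : Type*} [Field F] [Fintype F] [DecidableEq F]
    (p : ℕ) [Fact p.Prime] [CharP F p] (hp : p ≠ 2)
    (k : ℕ) (hk : 1 ≤ k) (hk2 : k + 2 ≤ Fintype.card F - 2)
    (hpk : p ∣ k + 2)
    (b c : F) (v : F[X]) (hv : v.degree < (k : WithBot ℕ))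
    (u : F → F)
    (hu : ∀ x : F, u x = (X ^ (k + 2) - C b * X ^ (k + 1) + C c * X ^ k + v).eval x)
    (hb : b = 0) (hc : c = 0)
    (hbig : 2 * (k + 2) > Fintype.card F + 2) :
    errDist u (RSCodeStd F k) ≤ Fintype.card F - k - 1 := by
  classical
  subst hb hc
  have hp2 : 2 < p := lt_of_le_of_ne (Fact.out : p.Prime).two_le (Ne.symm hp)
  have h2 : (2 : F) ≠ 0 := Ring.two_ne_zero (by rwa [ringChar.eq F p])
  have hdq : p ∣ Fintype.card F := by
    obtain ⟨n, _, hn⟩ := FiniteField.card F p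
    rw [hn]
    exact dvd_pow_self p n.ne_zero
  obtain ⟨l, hl⟩ : p ∣ Fintype.card F - (k + 2) := Nat.dvd_sub hdq hpk
  obtain ⟨T, hT, hT2⟩ := exists_good (F := F) p hp l (by omega)
  have hs1 : ∑ x ∈ Tᶜ, x = -∑ x ∈ T, x := by
    have h := FiniteField.sum_pow_lt_card_sub_one F 1 (by omega)
    simp only [pow_one] at h
    rw [← Finset.sum_add_sum_compl T] at h
    linear_combination h
  have hs2 : ∑ x ∈ Tᶜ, x ^ 2 = -∑ x ∈ T, x ^ 2 := by
    have h := FiniteField.sum_pow_lt_card_sub_one F 2 (by omega)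
    rw [← Finset.sum_add_sum_compl T] at h
    linear_combination h
  have hcard : #Tᶜ = k + 1 := by
    rw [Finset.card_compl]
    omega
  -- The last root is forced: it makes the sum of all `k + 2` roots vanish.
  let Z : Multiset F := (-∑ x ∈ Tᶜ, x) ::ₘ Tᶜ.val
  have hdeg := degree_prod_sub_X_pow h2 Z k
    (by rw [Multiset.card_cons]; exact congrArg (· + 1) hcard)
    (by
      have : Tᶜ.val.sum = ∑ x ∈ Tᶜ, x := Finset.sum_val _
      rw [Multiset.sum_cons, this]
      ring)
    (by
      have : (Tᶜ.val.map (· ^ 2)).sum = ∑ x ∈ Tᶜ, x ^ 2 := rfl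
      rw [Multiset.map_cons, Multiset.sum_cons, this, hs1, hs2, ← hT2]
      ring)
  set G : F[X] := (Z.map fun a => X - C a).prod with hG
  let P : F[X] := v - (G - X ^ (k + 2))
  have hP : P.degree < (k : WithBot ℕ) := lt_of_le_of_lt (degree_sub_le _ _) (max_lt hv hdeg)
  have hmem : (fun x => P.eval x) ∈ RSCodeStd F k := ⟨P, hP, fun _ => rfl⟩
  refine (Nat.sInf_le (Set.mem_image_of_mem (hammingDist u) hmem)).trans ?_
  have hsub : ({x | u x ≠ P.eval x} : Finset F) ⊆ T := by
    intro x hx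
    by_contra hxT
    simp only [Finset.mem_filter, Finset.mem_univ, true_and] at hx
    have hGx : G.eval x = 0 := by
      have hd : X - C x ∣ G := by
        refine Multiset.dvd_prod (Multiset.mem_map_of_mem (fun a => X - C a) ?_)
        exact Multiset.mem_cons_of_mem (Finset.mem_compl.2 hxT)
      exact dvd_iff_isRoot.1 hd
    refine hx ?_
    rw [hu x]
    simp [P, hGx]
    ring
  have hle := Finset.card_le_card hsub
  have hTq : #T = Fintype.card F - k - 1 := by omega
  exact hTq ▸ hle
end

section
/- Let q be a power of an odd prime p, let C_q be the standard Reed-Solomon code of dimension k ≥ 1 over F_q with k+2 ≤ q−2 and p ∣ k+2, and let u ∈ F_q^q be a received word whose interpolation polynomial is u(x) = x^{k+2} − b x^{k+1} + c x^k + v(x) with deg v(x) ≤ k−1. If b ≠ 0, then d(u,C_q) = q−k−2. -/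
/-!
Subtracting a codeword from `u` leaves a monic polynomial of degree `k + 2 < q`, which has at most
`k + 2` roots; hence every distance is at least `q - k - 2`. Equality holds as soon as some monic
polynomial `X ^ m - b X ^ (m - 1) + c X ^ (m - 2) + ⋯`, with `m = k + 2`, splits with distinct
roots over `F`, i.e. as soon as some `m`-subset of `F` has first and second elementary symmetric
functions `b` and `c`.

Since `0 < m < q`, swapping one element shows that some `m`-subset has nonzero sum, and rescaling
makes this sum equal to `b` (`exists_card_sum_eq`). Because `p ∣ m`, the substitution
`X ↦ X + t` keeps the coefficient of `X ^ (m - 1)`, while the coefficient of `X ^ (m - 2)` changes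
by `(m - 1) (-b) t = b t` (`coeff_taylor_of_dvd`). As `b ≠ 0`, a suitable `t` yields `c`.
-/

open Polynomial Finset

/-- The sum is made nonzero by exchanging one element, then adjusted by a dilation. -/
lemma exists_card_sum_eq_s10 {F : Type*} [Field F] [Fintype F] [DecidableEq F] (m : ℕ) (hm : 0 < m)
    (hm' : m < Fintype.card F) (b : F) (hb : b ≠ 0) :
    ∃ T : Finset F, #T = m ∧ ∑ s ∈ T, s = b := by
  obtain ⟨T, hT, hs⟩ : ∃ T : Finset F, #T = m ∧ ∑ s ∈ T, s ≠ 0 := by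
    obtain ⟨T, -, hT⟩ := Finset.exists_subset_card_eq (s := (univ : Finset F)) (n := m)
      (by rw [Finset.card_univ]; exact hm'.le)
    by_cases h : ∑ s ∈ T, s = 0
    · obtain ⟨a, ha⟩ := Finset.card_pos.1 (hT ▸ hm)
      obtain ⟨y, hy⟩ : ∃ y, y ∉ T := by
        by_contra! hall
        rw [Finset.eq_univ_iff_forall.2 hall, Finset.card_univ] at hT
        omega
      have hy' : y ∉ T.erase a := fun h => hy (Finset.mem_of_mem_erase h)
      refine ⟨insert y (T.erase a), ?_, ?_⟩
      · rw [Finset.card_insert_of_notMem hy', Finset.card_erase_of_mem ha]; omega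
      · rw [Finset.sum_insert hy', Finset.sum_erase_eq_sub ha, h, zero_sub, ← sub_eq_add_neg]
        exact sub_ne_zero.2 fun e => hy (e ▸ ha)
    · exact ⟨T, hT, h⟩
  have hne : b / (∑ s ∈ T, s) ≠ 0 := div_ne_zero hb hs
  refine ⟨T.image (fun s => b / (∑ s ∈ T, s) * s), ?_, ?_⟩
  · rw [Finset.card_image_of_injective _ (mul_right_injective₀ hne), hT]
  · rw [Finset.sum_image (fun x _ y _ h => mul_right_injective₀ hne h), ← Finset.mul_sum,
      div_mul_cancel₀ _ hs]

/-- In characteristic dividing the degree, a translation fixes the second coefficient and shifts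
the third one by a multiple of the second. -/
lemma coeff_taylor_of_dvd {F : Type*} [Field F] (p : ℕ) [Fact p.Prime] [CharP F p] (hp : p ≠ 2)
    (k : ℕ) (hpk : p ∣ k + 2) (f : F[X]) (hf : f.natDegree = k + 2) (t : F) :
    (taylor t f).coeff (k + 1) = f.coeff (k + 1) ∧
      (taylor t f).coeff k = f.coeff k - f.coeff (k + 1) * t := by
  have h0 : ((k + 2 : ℕ) : F) = 0 := (CharP.cast_eq_zero_iff F p _).2 hpk
  have h2 : (((k + 2).choose k : ℕ) : F) = 0 := by
    have hc : (k + 2).choose 2 * 2 = (k + 2) * (k + 1) := by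
      simpa using Nat.choose_two_right (k + 2) ▸ Nat.div_mul_cancel
        ((Nat.even_mul_pred_self (k + 2)).two_dvd)
    rw [Nat.choose_symm_of_eq_add (show k + 2 = k + 2 from rfl)]
    have hcF := congrArg (Nat.cast : ℕ → F) hc
    rw [Nat.cast_mul, Nat.cast_mul, h0, zero_mul] at hcF
    refine (mul_eq_zero.1 hcF).resolve_right fun h => hp ?_
    exact (Nat.prime_dvd_prime_iff_eq Fact.out Nat.prime_two).1
      ((CharP.cast_eq_zero_iff F p 2).1 h)
  constructor
  · have hd : (hasseDeriv (k + 1) f).natDegree < 2 := by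
      have := natDegree_hasseDeriv_le f (k + 1); omega
    rw [taylor_coeff, eval_eq_sum_range' hd]
    simp only [Finset.sum_range_succ, Finset.sum_range_zero, hasseDeriv_coeff]
    have e : (1 + (k + 1)).choose (k + 1) = k + 2 := by
      rw [show 1 + (k + 1) = (k + 1) + 1 by ring, Nat.choose_succ_self_right]
    rw [e, h0]
    simp
  · have hd : (hasseDeriv k f).natDegree < 3 := by
      have := natDegree_hasseDeriv_le f k; omega
    rw [taylor_coeff, eval_eq_sum_range' hd]
    simp only [Finset.sum_range_succ, Finset.sum_range_zero, hasseDeriv_coeff]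
    rw [show 2 + k = k + 2 by ring, show 1 + k = k + 1 by ring, h2, Nat.choose_succ_self_right]
    have h1 : ((k + 1 : ℕ) : F) = -1 := by
      push_cast at h0 ⊢
      linear_combination h0
    rw [h1]
    simp
    ring

/-- A polynomial with prescribed first three coefficients and `k + 2` distinct roots. -/
lemma exists_split_poly {F : Type*} [Field F] [Fintype F] [DecidableEq F]
    (p : ℕ) [Fact p.Prime] [CharP F p] (hp : p ≠ 2) (k : ℕ) (hk2 : k + 2 < Fintype.card F)
    (hpk : p ∣ k + 2) (b c : F) (hb : b ≠ 0) :
    ∃ g : F[X], (g - (X ^ (k + 2) - C b * X ^ (k + 1) + C c * X ^ k)).degree < (k : WithBot ℕ) ∧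
      #{x | g.eval x = 0} = k + 2 := by
  obtain ⟨T, hT, hs⟩ := exists_card_sum_eq_s10 (k + 2) (by omega) hk2 b hb
  set f : F[X] := ∏ s ∈ T, (X - C s) with hf
  have hmon : f.Monic := monic_prod_of_monic _ _ fun s _ => monic_X_sub_C s
  have hdeg : f.natDegree = k + 2 := by
    rw [hf, natDegree_prod_of_monic _ _ fun s _ => monic_X_sub_C s]; simp [hT]
  have hc1 : f.coeff (k + 1) = -b := by
    have := prod_X_sub_C_nextCoeff (s := T) (fun s : F => s)
    rw [← hf, nextCoeff_of_natDegree_pos (by omega), hdeg, hs] at this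
    exact this
  -- The new coefficient is `f.coeff k + b * t`, and `t` solves `f.coeff k + b * t = c`.
  let t : F := (c - f.coeff k) / b
  obtain ⟨g1, g0⟩ := coeff_taylor_of_dvd p hp k hpk f hdeg t
  have g2 : (taylor t f).coeff (k + 2) = 1 := by
    have hm : (taylor t f).Monic := by
      rw [Monic, leadingCoeff_taylor]; exact hmon
    have := hm.coeff_natDegree
    rwa [natDegree_taylor, hdeg] at this
  rw [hc1] at g1 g0
  have htb : b * t = c - f.coeff k := mul_div_cancel₀ _ hb
  have g0' : (taylor t f).coeff k = c := by rw [g0]; linear_combination htb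
  refine ⟨taylor t f, ?_, ?_⟩
  · rw [degree_lt_iff_coeff_zero]
    intro n hn
    obtain rfl | rfl | rfl | h : n = k ∨ n = k + 1 ∨ n = k + 2 ∨ k + 2 < n := by omega
    · simp [coeff_X_pow, g0']
    · simp [coeff_X_pow, g1]
    · simp [coeff_X_pow, g2]
    · have : (taylor t f).coeff n = 0 :=
        coeff_eq_zero_of_natDegree_lt (by rw [natDegree_taylor, hdeg]; exact h)
      simp [coeff_X_pow, this, show n ≠ k by omega, show n ≠ k + 1 by omega,
        show n ≠ k + 2 by omega]
  · rw [← hT]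
    refine Finset.card_bij (fun x _ => x + t) ?_ (fun _ _ _ _ h => add_right_cancel h) ?_
    · intro x hx
      simp only [Finset.mem_filter, Finset.mem_univ, true_and, taylor_eval, hf, eval_prod,
        Finset.prod_eq_zero_iff] at hx
      obtain ⟨s, hsT, hx⟩ := hx
      have : x + t = s := by simpa [sub_eq_zero, add_comm] using hx
      exact this ▸ hsT
    · intro s hsT
      refine ⟨s - t, ?_, by ring⟩
      simp only [Finset.mem_filter, Finset.mem_univ, true_and, taylor_eval, hf, eval_prod,
        Finset.prod_eq_zero_iff]
      exact ⟨s, hsT, by simp⟩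

/-- for `q` a power of an odd prime `p`, the standard
Reed-Solomon code `C_q` with `k + 2 ≤ q - 2` and `p ∣ k + 2`, and a received
word `u` with interpolation polynomial `x^{k+2} - b x^{k+1} + c x^k + v(x)`,
`deg v ≤ k - 1`: if `b ≠ 0`, then `d(u, C_q) = q - k - 2`. -/
theorem stmt_10 {F : Type*} [Field F] [Fintype F] [DecidableEq F]
    (p : ℕ) [Fact p.Prime] [CharP F p] (hp : p ≠ 2)
    (k : ℕ) (hk : 1 ≤ k) (hk2 : k + 2 ≤ Fintype.card F - 2)
    (hpk : p ∣ k + 2)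
    (b c : F) (v : F[X]) (hv : v.degree < (k : WithBot ℕ))
    (u : F → F)
    (hu : ∀ x : F, u x = (X ^ (k + 2) - C b * X ^ (k + 1) + C c * X ^ k + v).eval x)
    (hb : b ≠ 0) :
    errDist u (RSCodeStd F k) = Fintype.card F - k - 2 := by
  have hq : 4 ≤ Fintype.card F := by omega
  have key : ∀ P : F[X], ∀ w : F → F, (∀ x, w x = P.eval x) →
      hammingDist u w = Fintype.card F - #{x | ((X ^ (k + 2) - C b * X ^ (k + 1) + C c * X ^ k + v)
        - P).eval x = 0} := by
    intro P w hw
    have h := Finset.card_filter_add_card_filter_not (s := (univ : Finset F))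
      (fun x => ((X ^ (k + 2) - C b * X ^ (k + 1) + C c * X ^ k + v) - P).eval x = 0)
    have e : hammingDist u w = #{x | ¬ ((X ^ (k + 2) - C b * X ^ (k + 1) + C c * X ^ k + v)
        - P).eval x = 0} := by
      unfold hammingDist
      congr 1
      ext x
      simp only [Finset.mem_filter, Finset.mem_univ, true_and, hu, hw, eval_sub (q := P),
        sub_eq_zero, ne_eq]
    rw [Finset.card_univ] at h
    omega
  apply le_antisymm
  · obtain ⟨g, hg, hcard⟩ := exists_split_poly p hp k (by omega) hpk b c hb
    apply Nat.sInf_le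
    -- The nearest codeword is `u - g`.
    set P : F[X] := v - (g - (X ^ (k + 2) - C b * X ^ (k + 1) + C c * X ^ k)) with hP
    refine ⟨fun x => P.eval x, ⟨P, ?_, fun x => rfl⟩, ?_⟩
    · exact (degree_sub_le _ _).trans_lt (max_lt hv hg)
    · rw [key P _ fun x => rfl]
      have : (X ^ (k + 2) - C b * X ^ (k + 1) + C c * X ^ k + v) - P = g := by
        rw [hP]; ring
      rw [this, hcard]
      omega
  · apply le_csInf
    · exact ⟨_, 0, ⟨0, by simp, by simp⟩, rfl⟩
    · rintro _ ⟨w, ⟨P, hP, hw⟩, rfl⟩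
      rw [key P w hw]
      set h : F[X] := (X ^ (k + 2) - C b * X ^ (k + 1) + C c * X ^ k + v) - P with hh
      have hcoef : h.coeff (k + 2) = 1 := by
        have h1 := coeff_eq_zero_of_degree_lt (hP.trans (show (k : WithBot ℕ) < (k + 2 : ℕ) by
          exact_mod_cast (by omega : k < k + 2)))
        have h2 := coeff_eq_zero_of_degree_lt (hv.trans (show (k : WithBot ℕ) < (k + 2 : ℕ) by
          exact_mod_cast (by omega : k < k + 2)))
        simp [hh, coeff_X_pow, h1, h2]
      have hdeg : h.natDegree ≤ k + 2 := by
        rw [natDegree_le_iff_coeff_eq_zero]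
        intro n hn
        have h1 := coeff_eq_zero_of_degree_lt (hP.trans (show (k : WithBot ℕ) < (n : ℕ) by
          exact_mod_cast (by omega : k < n)))
        have h2 := coeff_eq_zero_of_degree_lt (hv.trans (show (k : WithBot ℕ) < (n : ℕ) by
          exact_mod_cast (by omega : k < n)))
        simp [hh, coeff_X_pow, h1, h2, show n ≠ k by omega, show n ≠ k + 1 by omega,
          show n ≠ k + 2 by omega]
      have hne : h ≠ 0 := by
        intro h0; rw [h0] at hcoef; simp at hcoef
      have hle : #{x | h.eval x = 0} ≤ k + 2 :=
        calc #{x | h.eval x = 0} ≤ #h.roots.toFinset := by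
              apply Finset.card_le_card
              intro x hx
              simpa [hne] using hx
          _ ≤ Multiset.card h.roots := Multiset.toFinset_card_le _
          _ ≤ h.natDegree := card_roots' h
          _ ≤ k + 2 := hdeg
      omega
end
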